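/- arXiv:1409.5184 — 3 statements merged into one kernel-verified Lean document; each statement's English description precedes it below -/
import Mathlib

section
/- Let (H,α) be a monoidal Hom-Hopf algebra, (A,β) a right (H,α)-Hom-comodule algebra, and (N,ν) a right (H,A)-Hom-Hopf module. Regard N as a left (H,α)-Hom-comodule via n↦S(n₍₁₎)⊗n₍₀₎. Then: (i) the map i: N^{coH}→A□_H N, i(n)=1_A⊗ν⁻¹(n), is well defined (its image lies in the cotensor product); (ii) the map p: A□_H N→N^{coH}, p(Σa⊗n)=Σn·a, is well defined — in particular for Σa⊗n∈A□_H N one has ρ_N(Σn·a)=Σν⁻¹(n·a)⊗1_H; (iii) p∘i = id on N^{coH}. -/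
open TensorProduct

noncomputable section

/-- A (unital) monoidal Hom-bialgebra, following Caenepeel–Goyvaerts.
The algebra axioms are stated pointwise, the coalgebra axioms at the level of
linear maps (using the standard vector-space associator to compare the two
sides of Hom-coassociativity). -/
structure MonoidalHomBialgebra (k : Type) [Field k] (H : Type) [AddCommGroup H] [Module k H] where
  mul : H →ₗ[k] H →ₗ[k] H
  one : H
  comul : H →ₗ[k] H ⊗[k] H
  counit : H →ₗ[k] k
  aut : H ≃ₗ[k] H
  hom_assoc : ∀ a b c, mul (aut a) (mul b c) = mul (mul a b) (aut c)
  mulOne : ∀ a, mul a one = aut a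
  oneMul : ∀ a, mul one a = aut a
  aut_mul : ∀ a b, aut (mul a b) = mul (aut a) (aut b)
  aut_one : aut one = one
  coassoc :
    (TensorProduct.assoc k H H H).toLinearMap ∘ₗ
        (TensorProduct.map comul aut.symm.toLinearMap) ∘ₗ comul =
      (TensorProduct.map aut.symm.toLinearMap comul) ∘ₗ comul
  counit_left :
    (TensorProduct.lid k H).toLinearMap ∘ₗ (TensorProduct.map counit LinearMap.id) ∘ₗ comul =
      aut.symm.toLinearMap
  counit_right :
    (TensorProduct.rid k H).toLinearMap ∘ₗ (TensorProduct.map LinearMap.id counit) ∘ₗ comul =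
      aut.symm.toLinearMap
  comul_aut :
    comul ∘ₗ aut.toLinearMap = (TensorProduct.map aut.toLinearMap aut.toLinearMap) ∘ₗ comul
  counit_aut : counit ∘ₗ aut.toLinearMap = counit
  comul_mul :
    comul ∘ₗ TensorProduct.lift mul =
      (TensorProduct.map (TensorProduct.lift mul) (TensorProduct.lift mul)) ∘ₗ
        (TensorProduct.tensorTensorTensorComm k H H H H).toLinearMap ∘ₗ
          (TensorProduct.map comul comul)
  comul_one : comul one = one ⊗ₜ[k] one
  counit_mul : ∀ a b, counit (mul a b) = counit a * counit b
  counit_one : counit one = 1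

/-- A monoidal Hom-Hopf algebra: a monoidal Hom-bialgebra with an antipode. -/
structure MonoidalHomHopf (k : Type) [Field k] (H : Type) [AddCommGroup H] [Module k H]
    extends MonoidalHomBialgebra k H where
  antipode : H →ₗ[k] H
  antipode_aut : antipode ∘ₗ aut.toLinearMap = aut.toLinearMap ∘ₗ antipode
  antipode_mul_left :
    TensorProduct.lift mul ∘ₗ (TensorProduct.map antipode LinearMap.id) ∘ₗ comul =
      LinearMap.toSpanSingleton k H one ∘ₗ counit
  antipode_mul_right :
    TensorProduct.lift mul ∘ₗ (TensorProduct.map LinearMap.id antipode) ∘ₗ comul =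
      LinearMap.toSpanSingleton k H one ∘ₗ counit

variable {k : Type} [Field k] {H : Type} [AddCommGroup H] [Module k H]

/-- A right (H,α)-Hom-comodule. -/
structure HomComodule (Hb : MonoidalHomBialgebra k H) (M : Type) [AddCommGroup M] [Module k M] where
  coact : M →ₗ[k] M ⊗[k] H
  aut : M ≃ₗ[k] M
  coassoc :
    (TensorProduct.map aut.symm.toLinearMap Hb.comul) ∘ₗ coact =
      (TensorProduct.assoc k M H H).toLinearMap ∘ₗ
        (TensorProduct.map coact Hb.aut.symm.toLinearMap) ∘ₗ coact
  counit :
    (TensorProduct.rid k M).toLinearMap ∘ₗ (TensorProduct.map LinearMap.id Hb.counit) ∘ₗ coact =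
      aut.symm.toLinearMap
  coact_aut :
    coact ∘ₗ aut.toLinearMap = (TensorProduct.map aut.toLinearMap Hb.aut.toLinearMap) ∘ₗ coact

/-- A left (H,α)-Hom-comodule. -/
structure HomLeftComodule (Hb : MonoidalHomBialgebra k H) (M : Type) [AddCommGroup M] [Module k M] where
  coact : M →ₗ[k] H ⊗[k] M
  aut : M ≃ₗ[k] M
  coassoc :
    (TensorProduct.map Hb.comul aut.symm.toLinearMap) ∘ₗ coact =
      (TensorProduct.assoc k H H M).symm.toLinearMap ∘ₗ
        (TensorProduct.map Hb.aut.symm.toLinearMap coact) ∘ₗ coact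
  counit :
    (TensorProduct.lid k M).toLinearMap ∘ₗ (TensorProduct.map Hb.counit LinearMap.id) ∘ₗ coact =
      aut.symm.toLinearMap
  coact_aut :
    coact ∘ₗ aut.toLinearMap = (TensorProduct.map Hb.aut.toLinearMap aut.toLinearMap) ∘ₗ coact

/-- A right (H,α)-Hom-comodule algebra. -/
structure HomComoduleAlgebra (Hb : MonoidalHomBialgebra k H) (A : Type) [AddCommGroup A] [Module k A] where
  mul : A →ₗ[k] A →ₗ[k] A
  one : A
  aut : A ≃ₗ[k] A
  hom_assoc : ∀ a b c, mul (aut a) (mul b c) = mul (mul a b) (aut c)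
  mulOne : ∀ a, mul a one = aut a
  oneMul : ∀ a, mul one a = aut a
  aut_mul : ∀ a b, aut (mul a b) = mul (aut a) (aut b)
  aut_one : aut one = one
  coact : A →ₗ[k] A ⊗[k] H
  coassoc :
    (TensorProduct.map aut.symm.toLinearMap Hb.comul) ∘ₗ coact =
      (TensorProduct.assoc k A H H).toLinearMap ∘ₗ
        (TensorProduct.map coact Hb.aut.symm.toLinearMap) ∘ₗ coact
  counit :
    (TensorProduct.rid k A).toLinearMap ∘ₗ (TensorProduct.map LinearMap.id Hb.counit) ∘ₗ coact =
      aut.symm.toLinearMap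
  coact_aut :
    coact ∘ₗ aut.toLinearMap = (TensorProduct.map aut.toLinearMap Hb.aut.toLinearMap) ∘ₗ coact
  coact_mul :
    coact ∘ₗ TensorProduct.lift mul =
      (TensorProduct.map (TensorProduct.lift mul) (TensorProduct.lift Hb.mul)) ∘ₗ
        (TensorProduct.tensorTensorTensorComm k A H A H).toLinearMap ∘ₗ
          (TensorProduct.map coact coact)
  coact_one : coact one = one ⊗ₜ[k] Hb.one

variable {A : Type} [AddCommGroup A] [Module k A]

/-- A right (A,β)-Hom-module. -/
structure HomModule {Hb : MonoidalHomBialgebra k H} (Ac : HomComoduleAlgebra Hb A)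
    (M : Type) [AddCommGroup M] [Module k M] where
  act : M →ₗ[k] A →ₗ[k] M
  aut : M ≃ₗ[k] M
  act_act : ∀ m a b, act (act m a) (Ac.aut b) = act (aut m) (Ac.mul a b)
  act_one : ∀ m, act m Ac.one = aut m
  aut_act : ∀ m a, aut (act m a) = act (aut m) (Ac.aut a)

/-- A right Hom-module over the subalgebra of `A` carved out by `Bset`
(typically the coinvariants `B = A^{co H}`): the action is a bilinear map
`M × A → M` whose Hom-module axioms are only required on `Bset`. -/
structure HomModuleOn {Hb : MonoidalHomBialgebra k H} (Ac : HomComoduleAlgebra Hb A)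
    (Bset : Set A) (M : Type) [AddCommGroup M] [Module k M] where
  act : M →ₗ[k] A →ₗ[k] M
  aut : M ≃ₗ[k] M
  act_act : ∀ m, ∀ b ∈ Bset, ∀ b' ∈ Bset, act (act m b) (Ac.aut b') = act (aut m) (Ac.mul b b')
  act_one : ∀ m, act m Ac.one = aut m
  aut_act : ∀ m, ∀ b ∈ Bset, aut (act m b) = act (aut m) (Ac.aut b)

/-- A left Hom-module over the subalgebra of `A` carved out by `Bset`. -/
structure HomLeftModuleOn {Hb : MonoidalHomBialgebra k H} (Ac : HomComoduleAlgebra Hb A)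
    (Bset : Set A) (M : Type) [AddCommGroup M] [Module k M] where
  act : A →ₗ[k] M →ₗ[k] M
  aut : M ≃ₗ[k] M
  act_act : ∀ m, ∀ b ∈ Bset, ∀ b' ∈ Bset, act (Ac.aut b) (act b' m) = act (Ac.mul b b') (aut m)
  act_one : ∀ m, act Ac.one m = aut m
  aut_act : ∀ m, ∀ b ∈ Bset, aut (act b m) = act (Ac.aut b) (aut m)

/-- A right-right (H,A)-Hom-Hopf module (a relative Hom-Hopf module). -/
structure HomHopfModule {Hb : MonoidalHomBialgebra k H} (Ac : HomComoduleAlgebra Hb A)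
    (N : Type) [AddCommGroup N] [Module k N] where
  act : N →ₗ[k] A →ₗ[k] N
  aut : N ≃ₗ[k] N
  act_act : ∀ n a b, act (act n a) (Ac.aut b) = act (aut n) (Ac.mul a b)
  act_one : ∀ n, act n Ac.one = aut n
  aut_act : ∀ n a, aut (act n a) = act (aut n) (Ac.aut a)
  coact : N →ₗ[k] N ⊗[k] H
  coassoc :
    (TensorProduct.map aut.symm.toLinearMap Hb.comul) ∘ₗ coact =
      (TensorProduct.assoc k N H H).toLinearMap ∘ₗ
        (TensorProduct.map coact Hb.aut.symm.toLinearMap) ∘ₗ coact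
  counit :
    (TensorProduct.rid k N).toLinearMap ∘ₗ (TensorProduct.map LinearMap.id Hb.counit) ∘ₗ coact =
      aut.symm.toLinearMap
  coact_aut :
    coact ∘ₗ aut.toLinearMap = (TensorProduct.map aut.toLinearMap Hb.aut.toLinearMap) ∘ₗ coact
  compat :
    coact ∘ₗ TensorProduct.lift act =
      (TensorProduct.map (TensorProduct.lift act) (TensorProduct.lift Hb.mul)) ∘ₗ
        (TensorProduct.tensorTensorTensorComm k N H A H).toLinearMap ∘ₗ
          (TensorProduct.map coact Ac.coact)

/-- A left-right (H,A)-Hom-Hopf module. -/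
structure LRHomHopfModule {Hb : MonoidalHomBialgebra k H} (Ac : HomComoduleAlgebra Hb A)
    (N : Type) [AddCommGroup N] [Module k N] where
  act : A →ₗ[k] N →ₗ[k] N
  aut : N ≃ₗ[k] N
  act_act : ∀ n a b, act (Ac.aut a) (act b n) = act (Ac.mul a b) (aut n)
  act_one : ∀ n, act Ac.one n = aut n
  aut_act : ∀ n a, aut (act a n) = act (Ac.aut a) (aut n)
  coact : N →ₗ[k] N ⊗[k] H
  coassoc :
    (TensorProduct.map aut.symm.toLinearMap Hb.comul) ∘ₗ coact =
      (TensorProduct.assoc k N H H).toLinearMap ∘ₗ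
        (TensorProduct.map coact Hb.aut.symm.toLinearMap) ∘ₗ coact
  counit :
    (TensorProduct.rid k N).toLinearMap ∘ₗ (TensorProduct.map LinearMap.id Hb.counit) ∘ₗ coact =
      aut.symm.toLinearMap
  coact_aut :
    coact ∘ₗ aut.toLinearMap = (TensorProduct.map aut.toLinearMap Hb.aut.toLinearMap) ∘ₗ coact
  compat :
    coact ∘ₗ TensorProduct.lift act =
      (TensorProduct.map (TensorProduct.lift act) (TensorProduct.lift Hb.mul)) ∘ₗ
        (TensorProduct.tensorTensorTensorComm k A H N H).toLinearMap ∘ₗ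
          (TensorProduct.map Ac.coact coact)

/-- Coinvariants (as a set) of a coaction `coact` with structure automorphism `autM`. -/
def coinvSetOf {M : Type} [AddCommGroup M] [Module k M] (oneH : H)
    (coact : M →ₗ[k] M ⊗[k] H) (autM : M ≃ₗ[k] M) : Set M :=
  {m | coact m = autM.symm m ⊗ₜ[k] oneH}

/-- Coinvariants as a submodule. -/
def coinvSubmoduleOf {M : Type} [AddCommGroup M] [Module k M] (oneH : H)
    (coact : M →ₗ[k] M ⊗[k] H) (autM : M ≃ₗ[k] M) : Submodule k M :=
  LinearMap.ker (coact - ((TensorProduct.mk k M H).flip oneH) ∘ₗ autM.symm.toLinearMap)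

/-- The coinvariants `B = A^{co H}` of a Hom-comodule algebra. -/
def coinvA {Hb : MonoidalHomBialgebra k H} (Ac : HomComoduleAlgebra Hb A) : Set A :=
  coinvSetOf Hb.one Ac.coact Ac.aut

/-- The defining relations of the tensor product `M ⊗_B A` for a right `B`-Hom-module `M`. -/
def relSubR {M : Type} [AddCommGroup M] [Module k M]
    (mulA : A →ₗ[k] A →ₗ[k] A) (autA : A ≃ₗ[k] A) (Bset : Set A)
    (act : M →ₗ[k] A →ₗ[k] M) (autM : M ≃ₗ[k] M) : Submodule k (M ⊗[k] A) :=
  Submodule.span k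
    {x | ∃ m a b, b ∈ Bset ∧ x = act m b ⊗ₜ[k] autA a - autM m ⊗ₜ[k] mulA b a}

/-- The defining relations of the tensor product `A ⊗_B M` for a left `B`-Hom-module `M`. -/
def relSubL {M : Type} [AddCommGroup M] [Module k M]
    (mulA : A →ₗ[k] A →ₗ[k] A) (autA : A ≃ₗ[k] A) (Bset : Set A)
    (act : A →ₗ[k] M →ₗ[k] M) (autM : M ≃ₗ[k] M) : Submodule k (A ⊗[k] M) :=
  Submodule.span k
    {x | ∃ a m b, b ∈ Bset ∧ x = autA a ⊗ₜ[k] act b m - mulA a b ⊗ₜ[k] autM m}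

/-- The cotensor product `X □_H V` of a right Hom-comodule and a left Hom-comodule,
as a submodule of `X ⊗ V`. -/
def cotensorSub {X V : Type} [AddCommGroup X] [Module k X] [AddCommGroup V] [Module k V]
    (coactX : X →ₗ[k] X ⊗[k] H) (autX : X ≃ₗ[k] X)
    (coactV : V →ₗ[k] H ⊗[k] V) (autV : V ≃ₗ[k] V) : Submodule k (X ⊗[k] V) :=
  LinearMap.ker
    ((TensorProduct.map coactX autV.symm.toLinearMap) -
      ((TensorProduct.assoc k X H V).symm.toLinearMap ∘ₗ
        TensorProduct.map autX.symm.toLinearMap coactV))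

/-- The canonical Galois map at the level of `A ⊗ A`:
`a ⊗ b ↦ β⁻¹(a)·b₍₀₎ ⊗ α(b₍₁₎)`. -/
def canPreLin {Hb : MonoidalHomBialgebra k H} (Ac : HomComoduleAlgebra Hb A) :
    A ⊗[k] A →ₗ[k] A ⊗[k] H :=
  (TensorProduct.map (TensorProduct.lift Ac.mul) Hb.aut.toLinearMap) ∘ₗ
    (TensorProduct.assoc k A A H).symm.toLinearMap ∘ₗ
      (TensorProduct.map Ac.aut.symm.toLinearMap Ac.coact)

/-- The second canonical Galois map at the level of `A ⊗ A`:
`a ⊗ b ↦ a₍₀₎·β⁻¹(b) ⊗ α(a₍₁₎)`. -/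
def canPreLin' {Hb : MonoidalHomBialgebra k H} (Ac : HomComoduleAlgebra Hb A) :
    A ⊗[k] A →ₗ[k] A ⊗[k] H :=
  (TensorProduct.map (TensorProduct.lift Ac.mul) Hb.aut.toLinearMap) ∘ₗ
    (TensorProduct.assoc k A A H).symm.toLinearMap ∘ₗ
      (TensorProduct.map LinearMap.id (TensorProduct.comm k H A).toLinearMap) ∘ₗ
        (TensorProduct.assoc k A H A).toLinearMap ∘ₗ
          (TensorProduct.map Ac.coact Ac.aut.symm.toLinearMap)

/-- `φ : H → A` is a total integral. -/
def IsTotalIntegral {Hb : MonoidalHomBialgebra k H} (Ac : HomComoduleAlgebra Hb A)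
    (φ : H →ₗ[k] A) : Prop :=
  φ ∘ₗ Hb.aut.toLinearMap = Ac.aut.toLinearMap ∘ₗ φ ∧
    Ac.coact ∘ₗ φ = (TensorProduct.map φ LinearMap.id) ∘ₗ Hb.comul ∧
      φ Hb.one = Ac.one

/-- The Hom-comodule structure on `M ⊗ A` inducing that of `M ⊗_B A`:
`m ⊗ a ↦ (μ⁻¹(m) ⊗ a₍₀₎) ⊗ α(a₍₁₎)`. -/
def quotCoactPreR {Hb : MonoidalHomBialgebra k H} (Ac : HomComoduleAlgebra Hb A)
    {M : Type} [AddCommGroup M] [Module k M] (autM : M ≃ₗ[k] M) :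
    (M ⊗[k] A) →ₗ[k] (M ⊗[k] A) ⊗[k] H :=
  (TensorProduct.assoc k M A H).symm.toLinearMap ∘ₗ
    TensorProduct.map autM.symm.toLinearMap
      ((TensorProduct.map LinearMap.id Hb.aut.toLinearMap) ∘ₗ Ac.coact)

/-- The Hom-comodule structure on `A ⊗ M` inducing that of `A ⊗_B M`:
`a ⊗ m ↦ (a₍₀₎ ⊗ μ⁻¹(m)) ⊗ α(a₍₁₎)`. -/
def quotCoactPreL {Hb : MonoidalHomBialgebra k H} (Ac : HomComoduleAlgebra Hb A)
    {M : Type} [AddCommGroup M] [Module k M] (autM : M ≃ₗ[k] M) :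
    (A ⊗[k] M) →ₗ[k] (A ⊗[k] M) ⊗[k] H :=
  (TensorProduct.assoc k A M H).symm.toLinearMap ∘ₗ
    (TensorProduct.map LinearMap.id (TensorProduct.comm k H M).toLinearMap) ∘ₗ
      (TensorProduct.assoc k A H M).toLinearMap ∘ₗ
        TensorProduct.map
          ((TensorProduct.map LinearMap.id Hb.aut.toLinearMap) ∘ₗ Ac.coact)
          autM.symm.toLinearMap

/-- Bijectivity of the adjunction unit `η_M : M → (M ⊗_B A)^{co H}`, `m ↦ μ⁻¹(m) ⊗ 1_A`,
for a right `B`-Hom-module `M`.  Since the Hom-comodule structure of `M ⊗_B A` is the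
one induced from `M ⊗ A`, it is quantified over all maps `ρbar` (resp. `θ`) induced by
the comodule structure (resp. by `μ⁻¹ ⊗ β⁻¹`) on `M ⊗ A`. -/
def UnitBijectiveR {Hb : MonoidalHomBialgebra k H} (Ac : HomComoduleAlgebra Hb A)
    (Bset : Set A) {M : Type} [AddCommGroup M] [Module k M]
    (S : HomModuleOn Ac Bset M) : Prop :=
  ∀ (ρbar : ((M ⊗[k] A) ⧸ relSubR Ac.mul Ac.aut Bset S.act S.aut) →ₗ[k]
      ((M ⊗[k] A) ⧸ relSubR Ac.mul Ac.aut Bset S.act S.aut) ⊗[k] H)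
    (θ : ((M ⊗[k] A) ⧸ relSubR Ac.mul Ac.aut Bset S.act S.aut) →ₗ[k]
      ((M ⊗[k] A) ⧸ relSubR Ac.mul Ac.aut Bset S.act S.aut)),
    ρbar ∘ₗ (relSubR Ac.mul Ac.aut Bset S.act S.aut).mkQ =
      (TensorProduct.map (relSubR Ac.mul Ac.aut Bset S.act S.aut).mkQ LinearMap.id) ∘ₗ
        quotCoactPreR Ac S.aut →
    θ ∘ₗ (relSubR Ac.mul Ac.aut Bset S.act S.aut).mkQ =
      (relSubR Ac.mul Ac.aut Bset S.act S.aut).mkQ ∘ₗ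
        TensorProduct.map S.aut.symm.toLinearMap Ac.aut.symm.toLinearMap →
    ((∀ m : M, ρbar ((relSubR Ac.mul Ac.aut Bset S.act S.aut).mkQ (S.aut.symm m ⊗ₜ[k] Ac.one)) =
        θ ((relSubR Ac.mul Ac.aut Bset S.act S.aut).mkQ (S.aut.symm m ⊗ₜ[k] Ac.one)) ⊗ₜ[k] Hb.one) ∧
      Function.Injective
        (fun m : M => (relSubR Ac.mul Ac.aut Bset S.act S.aut).mkQ (S.aut.symm m ⊗ₜ[k] Ac.one)) ∧
      ∀ x, ρbar x = θ x ⊗ₜ[k] Hb.one →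
        ∃ m : M, (relSubR Ac.mul Ac.aut Bset S.act S.aut).mkQ (S.aut.symm m ⊗ₜ[k] Ac.one) = x)

/-- The relations of `N^{co H} ⊗_B A` for a right (H,A)-Hom-Hopf module `N`;
the closure of the coinvariants under the `B`-action and the automorphism is
encoded by existential membership. -/
def relCoinvR {Hb : MonoidalHomBialgebra k H} (Ac : HomComoduleAlgebra Hb A)
    (Bset : Set A) {N : Type} [AddCommGroup N] [Module k N]
    (P : HomHopfModule Ac N) :
    Submodule k ((coinvSubmoduleOf Hb.one P.coact P.aut : Submodule k N) ⊗[k] A) :=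
  Submodule.span k
    {x | ∃ (n n' n'' : coinvSubmoduleOf Hb.one P.coact P.aut) (a b : A), b ∈ Bset ∧
      (n' : N) = P.act n b ∧ (n'' : N) = P.aut n ∧
      x = n' ⊗ₜ[k] Ac.aut a - n'' ⊗ₜ[k] Ac.mul b a}

/-- The counit of the adjunction at the level of `N^{co H} ⊗ A`: `n ⊗ a ↦ n · a`. -/
def counitPre {Hb : MonoidalHomBialgebra k H} (Ac : HomComoduleAlgebra Hb A)
    {N : Type} [AddCommGroup N] [Module k N] (P : HomHopfModule Ac N) :
    ((coinvSubmoduleOf Hb.one P.coact P.aut : Submodule k N) ⊗[k] A) →ₗ[k] N :=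
  TensorProduct.lift (P.act ∘ₗ (coinvSubmoduleOf Hb.one P.coact P.aut).subtype)

/-- Bijectivity of the adjunction counit `ε_N : N^{co H} ⊗_B A → N`, `n ⊗ a ↦ n·a`:
equivalently, the lift `N^{co H} ⊗ A → N` is surjective and its kernel is exactly
the defining relations of `⊗_B`. -/
def CounitBijectiveR {Hb : MonoidalHomBialgebra k H} (Ac : HomComoduleAlgebra Hb A)
    (Bset : Set A) {N : Type} [AddCommGroup N] [Module k N]
    (P : HomHopfModule Ac N) : Prop :=
  Function.Surjective (counitPre Ac P) ∧ LinearMap.ker (counitPre Ac P) = relCoinvR Ac Bset P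

/-- Bijectivity of the adjunction unit `η'_M : M → (A ⊗_B M)^{co H}`, `m ↦ 1_A ⊗ μ⁻¹(m)`,
for a left `B`-Hom-module `M`. -/
def UnitBijectiveL {Hb : MonoidalHomBialgebra k H} (Ac : HomComoduleAlgebra Hb A)
    (Bset : Set A) {M : Type} [AddCommGroup M] [Module k M]
    (S : HomLeftModuleOn Ac Bset M) : Prop :=
  ∀ (ρbar : ((A ⊗[k] M) ⧸ relSubL Ac.mul Ac.aut Bset S.act S.aut) →ₗ[k]
      ((A ⊗[k] M) ⧸ relSubL Ac.mul Ac.aut Bset S.act S.aut) ⊗[k] H)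
    (θ : ((A ⊗[k] M) ⧸ relSubL Ac.mul Ac.aut Bset S.act S.aut) →ₗ[k]
      ((A ⊗[k] M) ⧸ relSubL Ac.mul Ac.aut Bset S.act S.aut)),
    ρbar ∘ₗ (relSubL Ac.mul Ac.aut Bset S.act S.aut).mkQ =
      (TensorProduct.map (relSubL Ac.mul Ac.aut Bset S.act S.aut).mkQ LinearMap.id) ∘ₗ
        quotCoactPreL Ac S.aut →
    θ ∘ₗ (relSubL Ac.mul Ac.aut Bset S.act S.aut).mkQ =
      (relSubL Ac.mul Ac.aut Bset S.act S.aut).mkQ ∘ₗ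
        TensorProduct.map Ac.aut.symm.toLinearMap S.aut.symm.toLinearMap →
    ((∀ m : M, ρbar ((relSubL Ac.mul Ac.aut Bset S.act S.aut).mkQ (Ac.one ⊗ₜ[k] S.aut.symm m)) =
        θ ((relSubL Ac.mul Ac.aut Bset S.act S.aut).mkQ (Ac.one ⊗ₜ[k] S.aut.symm m)) ⊗ₜ[k] Hb.one) ∧
      Function.Injective
        (fun m : M => (relSubL Ac.mul Ac.aut Bset S.act S.aut).mkQ (Ac.one ⊗ₜ[k] S.aut.symm m)) ∧
      ∀ x, ρbar x = θ x ⊗ₜ[k] Hb.one →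
        ∃ m : M, (relSubL Ac.mul Ac.aut Bset S.act S.aut).mkQ (Ac.one ⊗ₜ[k] S.aut.symm m) = x)

/-- The relations of `A ⊗_B N^{co H}` for a left-right (H,A)-Hom-Hopf module `N`. -/
def relCoinvL {Hb : MonoidalHomBialgebra k H} (Ac : HomComoduleAlgebra Hb A)
    (Bset : Set A) {N : Type} [AddCommGroup N] [Module k N]
    (P : LRHomHopfModule Ac N) :
    Submodule k (A ⊗[k] (coinvSubmoduleOf Hb.one P.coact P.aut : Submodule k N)) :=
  Submodule.span k
    {x | ∃ (n n' n'' : coinvSubmoduleOf Hb.one P.coact P.aut) (a b : A), b ∈ Bset ∧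
      (n' : N) = P.act b n ∧ (n'' : N) = P.aut n ∧
      x = Ac.aut a ⊗ₜ[k] n' - Ac.mul a b ⊗ₜ[k] n''}

/-- The counit at the level of `A ⊗ N^{co H}`: `a ⊗ n ↦ a · n`. -/
def counitPreL {Hb : MonoidalHomBialgebra k H} (Ac : HomComoduleAlgebra Hb A)
    {N : Type} [AddCommGroup N] [Module k N] (P : LRHomHopfModule Ac N) :
    (A ⊗[k] (coinvSubmoduleOf Hb.one P.coact P.aut : Submodule k N)) →ₗ[k] N :=
  TensorProduct.lift (P.act.compl₂ (coinvSubmoduleOf Hb.one P.coact P.aut).subtype)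

/-- Bijectivity of the counit `ε'_N : A ⊗_B N^{co H} → N`. -/
def CounitBijectiveL {Hb : MonoidalHomBialgebra k H} (Ac : HomComoduleAlgebra Hb A)
    (Bset : Set A) {N : Type} [AddCommGroup N] [Module k N]
    (P : LRHomHopfModule Ac N) : Prop :=
  Function.Surjective (counitPreL Ac P) ∧ LinearMap.ker (counitPreL Ac P) = relCoinvL Ac Bset P

/-- A morphism of right `B`-Hom-modules. -/
def IsHomModuleOnHomR {Hb : MonoidalHomBialgebra k H} (Ac : HomComoduleAlgebra Hb A)
    (Bset : Set A) {M₁ M₂ : Type} [AddCommGroup M₁] [Module k M₁] [AddCommGroup M₂] [Module k M₂]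
    (S₁ : HomModuleOn Ac Bset M₁) (S₂ : HomModuleOn Ac Bset M₂) (f : M₁ →ₗ[k] M₂) : Prop :=
  (∀ m, ∀ b ∈ Bset, f (S₁.act m b) = S₂.act (f m) b) ∧ ∀ m, f (S₁.aut m) = S₂.aut (f m)

/-- A morphism of left `B`-Hom-modules. -/
def IsHomModuleOnHomL {Hb : MonoidalHomBialgebra k H} (Ac : HomComoduleAlgebra Hb A)
    (Bset : Set A) {M₁ M₂ : Type} [AddCommGroup M₁] [Module k M₁] [AddCommGroup M₂] [Module k M₂]
    (S₁ : HomLeftModuleOn Ac Bset M₁) (S₂ : HomLeftModuleOn Ac Bset M₂) (f : M₁ →ₗ[k] M₂) : Prop :=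
  (∀ m, ∀ b ∈ Bset, f (S₁.act b m) = S₂.act b (f m)) ∧ ∀ m, f (S₁.aut m) = S₂.aut (f m)

/-- `A` is faithfully flat as a left `B`-Hom-module: the induced functor `− ⊗_B A`
on right `B`-Hom-modules preserves and reflects exactness. -/
def FaithfullyFlatLeftOf {Hb : MonoidalHomBialgebra k H} (Ac : HomComoduleAlgebra Hb A)
    (Bset : Set A) : Prop :=
  ∀ (M₁ M₂ M₃ : Type) [AddCommGroup M₁] [Module k M₁] [AddCommGroup M₂] [Module k M₂]
    [AddCommGroup M₃] [Module k M₃]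
    (S₁ : HomModuleOn Ac Bset M₁) (S₂ : HomModuleOn Ac Bset M₂) (S₃ : HomModuleOn Ac Bset M₃)
    (f : M₁ →ₗ[k] M₂) (g : M₂ →ₗ[k] M₃),
    IsHomModuleOnHomR Ac Bset S₁ S₂ f → IsHomModuleOnHomR Ac Bset S₂ S₃ g →
    ∀ (fbar : ((M₁ ⊗[k] A) ⧸ relSubR Ac.mul Ac.aut Bset S₁.act S₁.aut) →ₗ[k]
        ((M₂ ⊗[k] A) ⧸ relSubR Ac.mul Ac.aut Bset S₂.act S₂.aut))
      (gbar : ((M₂ ⊗[k] A) ⧸ relSubR Ac.mul Ac.aut Bset S₂.act S₂.aut) →ₗ[k]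
        ((M₃ ⊗[k] A) ⧸ relSubR Ac.mul Ac.aut Bset S₃.act S₃.aut)),
      fbar ∘ₗ (relSubR Ac.mul Ac.aut Bset S₁.act S₁.aut).mkQ =
        (relSubR Ac.mul Ac.aut Bset S₂.act S₂.aut).mkQ ∘ₗ TensorProduct.map f LinearMap.id →
      gbar ∘ₗ (relSubR Ac.mul Ac.aut Bset S₂.act S₂.aut).mkQ =
        (relSubR Ac.mul Ac.aut Bset S₃.act S₃.aut).mkQ ∘ₗ TensorProduct.map g LinearMap.id →
      (LinearMap.range f = LinearMap.ker g ↔ LinearMap.range fbar = LinearMap.ker gbar)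

/-- `A` is faithfully flat as a right `B`-Hom-module: the induced functor `A ⊗_B −`
on left `B`-Hom-modules preserves and reflects exactness. -/
def FaithfullyFlatRightOf {Hb : MonoidalHomBialgebra k H} (Ac : HomComoduleAlgebra Hb A)
    (Bset : Set A) : Prop :=
  ∀ (M₁ M₂ M₃ : Type) [AddCommGroup M₁] [Module k M₁] [AddCommGroup M₂] [Module k M₂]
    [AddCommGroup M₃] [Module k M₃]
    (S₁ : HomLeftModuleOn Ac Bset M₁) (S₂ : HomLeftModuleOn Ac Bset M₂)
    (S₃ : HomLeftModuleOn Ac Bset M₃)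
    (f : M₁ →ₗ[k] M₂) (g : M₂ →ₗ[k] M₃),
    IsHomModuleOnHomL Ac Bset S₁ S₂ f → IsHomModuleOnHomL Ac Bset S₂ S₃ g →
    ∀ (fbar : ((A ⊗[k] M₁) ⧸ relSubL Ac.mul Ac.aut Bset S₁.act S₁.aut) →ₗ[k]
        ((A ⊗[k] M₂) ⧸ relSubL Ac.mul Ac.aut Bset S₂.act S₂.aut))
      (gbar : ((A ⊗[k] M₂) ⧸ relSubL Ac.mul Ac.aut Bset S₂.act S₂.aut) →ₗ[k]
        ((A ⊗[k] M₃) ⧸ relSubL Ac.mul Ac.aut Bset S₃.act S₃.aut)),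
      fbar ∘ₗ (relSubL Ac.mul Ac.aut Bset S₁.act S₁.aut).mkQ =
        (relSubL Ac.mul Ac.aut Bset S₂.act S₂.aut).mkQ ∘ₗ TensorProduct.map LinearMap.id f →
      gbar ∘ₗ (relSubL Ac.mul Ac.aut Bset S₂.act S₂.aut).mkQ =
        (relSubL Ac.mul Ac.aut Bset S₃.act S₃.aut).mkQ ∘ₗ TensorProduct.map LinearMap.id g →
      (LinearMap.range f = LinearMap.ker g ↔ LinearMap.range fbar = LinearMap.ker gbar)

/-- `A` is flat as a left `B`-Hom-module: `− ⊗_B A` preserves exactness. -/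
def FlatLeftOf {Hb : MonoidalHomBialgebra k H} (Ac : HomComoduleAlgebra Hb A)
    (Bset : Set A) : Prop :=
  ∀ (M₁ M₂ M₃ : Type) [AddCommGroup M₁] [Module k M₁] [AddCommGroup M₂] [Module k M₂]
    [AddCommGroup M₃] [Module k M₃]
    (S₁ : HomModuleOn Ac Bset M₁) (S₂ : HomModuleOn Ac Bset M₂) (S₃ : HomModuleOn Ac Bset M₃)
    (f : M₁ →ₗ[k] M₂) (g : M₂ →ₗ[k] M₃),
    IsHomModuleOnHomR Ac Bset S₁ S₂ f → IsHomModuleOnHomR Ac Bset S₂ S₃ g →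
    ∀ (fbar : ((M₁ ⊗[k] A) ⧸ relSubR Ac.mul Ac.aut Bset S₁.act S₁.aut) →ₗ[k]
        ((M₂ ⊗[k] A) ⧸ relSubR Ac.mul Ac.aut Bset S₂.act S₂.aut))
      (gbar : ((M₂ ⊗[k] A) ⧸ relSubR Ac.mul Ac.aut Bset S₂.act S₂.aut) →ₗ[k]
        ((M₃ ⊗[k] A) ⧸ relSubR Ac.mul Ac.aut Bset S₃.act S₃.aut)),
      fbar ∘ₗ (relSubR Ac.mul Ac.aut Bset S₁.act S₁.aut).mkQ =
        (relSubR Ac.mul Ac.aut Bset S₂.act S₂.aut).mkQ ∘ₗ TensorProduct.map f LinearMap.id →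
      gbar ∘ₗ (relSubR Ac.mul Ac.aut Bset S₂.act S₂.aut).mkQ =
        (relSubR Ac.mul Ac.aut Bset S₃.act S₃.aut).mkQ ∘ₗ TensorProduct.map g LinearMap.id →
      (LinearMap.range f = LinearMap.ker g → LinearMap.range fbar = LinearMap.ker gbar)

end

/-! STATEMENT 9: For a right (H,A)-Hom-Hopf module `N`, viewed as a left
Hom-comodule via `n ↦ S(n₍₁₎)⊗n₍₀₎`, the maps `i : N^{co H} → A □_H N`,
`i(n) = 1_A ⊗ ν⁻¹(n)`, and `p : A □_H N → N^{co H}`, `p(a⊗n) = n·a`,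
are well defined and `p ∘ i = id`. -/
theorem statement9
    (k : Type) [Field k] (H : Type) [AddCommGroup H] [Module k H]
    (Hh : MonoidalHomHopf k H)
    (A : Type) [AddCommGroup A] [Module k A]
    (Ac : HomComoduleAlgebra Hh.toMonoidalHomBialgebra A)
    (N : Type) [AddCommGroup N] [Module k N]
    (P : HomHopfModule Ac N)
    (coactL : N →ₗ[k] H ⊗[k] N)
    -- the left Hom-comodule structure n ↦ S(n₍₁₎) ⊗ n₍₀₎ on N
    (hcoactL : coactL =
      (TensorProduct.map Hh.antipode LinearMap.id) ∘ₗ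
        (TensorProduct.comm k N H).toLinearMap ∘ₗ P.coact) :
    -- (i) i is well defined
    (∀ n ∈ coinvSetOf Hh.one P.coact P.aut,
        (Ac.one ⊗ₜ[k] P.aut.symm n) ∈ cotensorSub Ac.coact Ac.aut coactL P.aut) ∧
    -- (ii) p is well defined: p(Σ a⊗n) = Σ n·a lands in the coinvariants
    (∀ t ∈ cotensorSub Ac.coact Ac.aut coactL P.aut,
        P.coact ((TensorProduct.lift P.act.flip) t) =
          P.aut.symm ((TensorProduct.lift P.act.flip) t) ⊗ₜ[k] Hh.one) ∧
    -- (iii) p ∘ i = id on N^{co H}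
    (∀ n ∈ coinvSetOf Hh.one P.coact P.aut,
        (TensorProduct.lift P.act.flip) (Ac.one ⊗ₜ[k] P.aut.symm n) = n) := by
  subst hcoactL
  have hS1 : Hh.antipode Hh.one = Hh.one := by
    have h := LinearMap.congr_fun Hh.antipode_mul_left Hh.one
    simp only [LinearMap.comp_apply, Hh.comul_one, TensorProduct.map_tmul, TensorProduct.lift.tmul,
      LinearMap.id_apply, Hh.mulOne, Hh.counit_one, LinearMap.toSpanSingleton_apply, one_smul] at h
    apply Hh.aut.injective
    rw [h, Hh.aut_one]
  have hone : Hh.aut.symm Hh.one = Hh.one := by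
    rw [LinearEquiv.symm_apply_eq, Hh.aut_one]
  have honeA : Ac.aut.symm Ac.one = Ac.one := by
    rw [LinearEquiv.symm_apply_eq, Ac.aut_one]
  have hca : ∀ n, P.coact (P.aut n) =
      TensorProduct.map P.aut.toLinearMap Hh.aut.toLinearMap (P.coact n) :=
    fun n => LinearMap.congr_fun P.coact_aut n
  have hSa : ∀ h, Hh.antipode (Hh.aut h) = Hh.aut (Hh.antipode h) :=
    fun h => LinearMap.congr_fun Hh.antipode_aut h
  refine ⟨?_, ?_, ?_⟩
  · intro n hn
    have hn' : P.coact n = P.aut.symm n ⊗ₜ[k] Hh.one := hn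
    have hm : P.coact (P.aut.symm n) = P.aut.symm (P.aut.symm n) ⊗ₜ[k] Hh.one := by
      have h1 := hca (P.aut.symm n)
      rw [LinearEquiv.apply_symm_apply, hn'] at h1
      have h2 := congrArg
        (TensorProduct.map P.aut.symm.toLinearMap Hh.aut.symm.toLinearMap) h1
      rw [← LinearMap.comp_apply (TensorProduct.map _ _) (TensorProduct.map _ _),
        ← TensorProduct.map_comp] at h2
      simp [hone] at h2
      exact h2.symm
    simp [cotensorSub, LinearMap.mem_ker, Ac.coact_one, hm, hS1, honeA]
  · intro t ht
    set Ψ : (A ⊗[k] H) ⊗[k] N →ₗ[k] N ⊗[k] H :=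
      (TensorProduct.map (TensorProduct.lift P.act) (TensorProduct.lift Hh.mul)) ∘ₗ
        (TensorProduct.tensorTensorTensorComm k N H A H).toLinearMap ∘ₗ
          (TensorProduct.map (P.coact ∘ₗ P.aut.toLinearMap) LinearMap.id) ∘ₗ
            (TensorProduct.comm k (A ⊗[k] H) N).toLinearMap with hΨ
    have hL : Ψ ∘ₗ TensorProduct.map Ac.coact P.aut.symm.toLinearMap =
        P.coact ∘ₗ TensorProduct.lift P.act.flip := by
      apply TensorProduct.ext'
      intro a n
      have h := LinearMap.congr_fun P.compat (n ⊗ₜ[k] a)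
      simp only [LinearMap.comp_apply, TensorProduct.lift.tmul, TensorProduct.map_tmul] at h
      simp [hΨ, h]
    have hR : Ψ ∘ₗ ((TensorProduct.assoc k A H N).symm.toLinearMap ∘ₗ
        TensorProduct.map Ac.aut.symm.toLinearMap
          ((TensorProduct.map Hh.antipode LinearMap.id) ∘ₗ
            (TensorProduct.comm k N H).toLinearMap ∘ₗ P.coact)) =
        ((TensorProduct.mk k N H).flip Hh.one) ∘ₗ P.aut.symm.toLinearMap ∘ₗ
          TensorProduct.lift P.act.flip := by
      apply TensorProduct.ext'
      intro a n
      obtain ⟨b, rfl⟩ := Ac.aut.surjective a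
      set Q : N ⊗[k] (H ⊗[k] H) →ₗ[k] N ⊗[k] H :=
        TensorProduct.map (P.act.flip b ∘ₗ P.aut.toLinearMap)
          (Hh.aut.toLinearMap ∘ₗ TensorProduct.lift Hh.mul ∘ₗ
            TensorProduct.map LinearMap.id Hh.antipode) with hQ
      have h1 : ∀ x : N ⊗[k] H,
          Ψ ((TensorProduct.assoc k A H N).symm (b ⊗ₜ[k]
            (TensorProduct.map Hh.antipode LinearMap.id (TensorProduct.comm k N H x)))) =
          Q (TensorProduct.assoc k N H H
            (TensorProduct.map P.coact Hh.aut.symm.toLinearMap x)) := by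
        intro x
        induction x with
        | zero => simp
        | add x y hx hy => simp only [map_add, TensorProduct.tmul_add, hx, hy]
        | tmul m h =>
          simp only [hΨ, LinearMap.comp_apply, TensorProduct.comm_tmul, TensorProduct.map_tmul,
            LinearMap.id_apply, TensorProduct.assoc_symm_tmul, LinearEquiv.coe_coe, hca]
          generalize P.coact m = y
          induction y with
          | zero => simp
          | add x y hx hy => simp only [map_add, TensorProduct.add_tmul, hx, hy]
          | tmul m' h' =>
            simp [hQ, Hh.aut_mul, ← hSa]
      have h2 : ∀ x : N ⊗[k] H, Q (TensorProduct.map P.aut.symm.toLinearMap Hh.comul x) =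
          TensorProduct.map (P.act.flip b) (LinearMap.toSpanSingleton k H Hh.one)
            (TensorProduct.map LinearMap.id Hh.counit x) := by
        intro x
        induction x with
        | zero => simp
        | add x y hx hy => simp only [map_add, hx, hy]
        | tmul m h =>
          have h3 := LinearMap.congr_fun Hh.antipode_mul_right h
          simp only [LinearMap.comp_apply] at h3
          simp [hQ, h3, Hh.aut_one]
      have h4 : TensorProduct.map LinearMap.id Hh.counit (P.coact n) =
          P.aut.symm n ⊗ₜ[k] (1 : k) := by
        apply (TensorProduct.rid k N).injective
        have h := LinearMap.congr_fun P.counit n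
        simp only [LinearMap.comp_apply, LinearEquiv.coe_coe] at h
        rw [h]; simp
      have h5 := LinearMap.congr_fun P.coassoc n
      simp only [LinearMap.comp_apply, LinearEquiv.coe_coe] at h5
      have h6 : P.aut.symm (P.act n (Ac.aut b)) = P.act (P.aut.symm n) b := by
        rw [LinearEquiv.symm_apply_eq, P.aut_act, LinearEquiv.apply_symm_apply]
      simp only [LinearMap.comp_apply, LinearEquiv.coe_coe, TensorProduct.map_tmul,
        LinearEquiv.symm_apply_apply, h1]
      rw [← h5, h2, h4]
      simp [h6]
    have ht' := LinearMap.mem_ker.mp ht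
    rw [LinearMap.sub_apply, sub_eq_zero] at ht'
    have e1 := LinearMap.congr_fun hL t
    have e2 := LinearMap.congr_fun hR t
    rw [LinearMap.comp_apply] at e1 e2
    rw [ht'] at e1
    exact e1.symm.trans e2
  · intro n _
    simp [P.act_one]
end

section
/- Let (H,α) be a monoidal Hom-Hopf algebra, (A,β) a right (H,α)-Hom-comodule algebra, and φ:H→A a total integral. Define t:A→A by t(a)=a₍₀₎φ(S(a₍₁₎)). Then t takes values in the coinvariants B=A^{coH}: for every a∈A, ρ_A(t(a)) = β⁻¹(t(a))⊗1_H. -/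
open TensorProduct

/-- Reassociation `x ⊗ ((b ⊗ c) ⊗ d) ↦ (x ⊗ b) ⊗ (c ⊗ d)`. -/
noncomputable def reassoc4 (k M H : Type) [Field k] [AddCommGroup H] [Module k H]
    [AddCommGroup M] [Module k M] :
    M ⊗[k] ((H ⊗[k] H) ⊗[k] H) →ₗ[k] (M ⊗[k] H) ⊗[k] (H ⊗[k] H) :=
  (TensorProduct.assoc k M H (H ⊗[k] H)).symm.toLinearMap ∘ₗ
    TensorProduct.map LinearMap.id (TensorProduct.assoc k H H H).toLinearMap

theorem four_lemma {k M H : Type} [Field k] [AddCommGroup H] [Module k H]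
    [AddCommGroup M] [Module k M] (ρ : M →ₗ[k] M ⊗[k] H) (D : H →ₗ[k] H ⊗[k] H)
    (hD : (TensorProduct.assoc k H H H).toLinearMap ∘ₗ
        (TensorProduct.map D LinearMap.id) ∘ₗ D = (TensorProduct.map LinearMap.id D) ∘ₗ D)
    (hρ : (TensorProduct.assoc k M H H).toLinearMap ∘ₗ
        (TensorProduct.map ρ LinearMap.id) ∘ₗ ρ = (TensorProduct.map LinearMap.id D) ∘ₗ ρ) :
    TensorProduct.map ρ D ∘ₗ ρ =
      reassoc4 k M H ∘ₗ TensorProduct.map LinearMap.id (TensorProduct.map D LinearMap.id ∘ₗ D) ∘ₗ ρ := by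
  have h1 : reassoc4 k M H ∘ₗ TensorProduct.map LinearMap.id (TensorProduct.map D LinearMap.id ∘ₗ D)
      = (TensorProduct.assoc k M H (H ⊗[k] H)).symm.toLinearMap ∘ₗ
        TensorProduct.map LinearMap.id (TensorProduct.map LinearMap.id D) ∘ₗ
          TensorProduct.map LinearMap.id D := by
    rw [reassoc4, ← TensorProduct.map_comp, ← hD, LinearMap.comp_assoc, ← TensorProduct.map_comp]
  have h2 : (TensorProduct.assoc k M H (H ⊗[k] H)).symm.toLinearMap ∘ₗ
        TensorProduct.map LinearMap.id (TensorProduct.map LinearMap.id D) ∘ₗ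
          (TensorProduct.assoc k M H H).toLinearMap = TensorProduct.map LinearMap.id D := by
    ext x b c; simp
  have h3 : TensorProduct.map ρ D = TensorProduct.map LinearMap.id D ∘ₗ
      TensorProduct.map ρ LinearMap.id := by
    rw [← TensorProduct.map_comp]; simp
  rw [← LinearMap.comp_assoc, h1, LinearMap.comp_assoc, LinearMap.comp_assoc, ← hρ, h3, ← h2]
  simp only [LinearMap.comp_assoc]

section cls
open Coalgebra HopfAlgebra WithConv

theorem comul_antipode_cls {k H : Type} [Field k] [Ring H] [HopfAlgebra k H] :
    (comul : H →ₗ[k] H ⊗[k] H) ∘ₗ antipode k =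
      TensorProduct.map (antipode k) (antipode k) ∘ₗ (TensorProduct.comm k H H).toLinearMap ∘ₗ
        comul := by
  apply WithConv.toConv_injective
  refine (left_inv_eq_right_inv (a := toConv (comul : H →ₗ[k] H ⊗[k] H)) ?_
    LinearMap.comul_right_inv).symm
  apply WithConv.ofConv_injective
  simp only [LinearMap.convMul_def, LinearMap.convOne_def, ofConv_toConv]
  have e1 : TensorProduct.map (TensorProduct.map (antipode k) (antipode k) ∘ₗ
        (TensorProduct.comm k H H).toLinearMap ∘ₗ comul) (comul : H →ₗ[k] H ⊗[k] H) =
      TensorProduct.map (TensorProduct.map (antipode k) (antipode k) ∘ₗ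
        (TensorProduct.comm k H H).toLinearMap) LinearMap.id ∘ₗ TensorProduct.map comul comul := by
    rw [← TensorProduct.map_comp]; simp [LinearMap.comp_assoc]
  rw [e1, LinearMap.comp_assoc, four_lemma (comul : H →ₗ[k] H ⊗[k] H) comul
    (Coalgebra.coassoc) (Coalgebra.coassoc)]
  set P := LinearMap.mul' k (H ⊗[k] H) ∘ₗ (TensorProduct.map (TensorProduct.map (antipode k)
    (antipode k) ∘ₗ (TensorProduct.comm k H H).toLinearMap) LinearMap.id) ∘ₗ reassoc4 k H H with hP
  have e2 : ∀ (a d : H) (u : H ⊗[k] H), P (a ⊗ₜ (u ⊗ₜ d)) =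
      (LinearMap.mul' k H (TensorProduct.map (antipode k) LinearMap.id u)) ⊗ₜ
        (antipode k a * d) := by
    intro a d u
    induction u with
    | zero => simp
    | add x y hx hy =>
      simp only [TensorProduct.add_tmul, TensorProduct.tmul_add, map_add, hx, hy]
    | tmul b c => simp [hP, reassoc4]
  have e3 : P ∘ₗ TensorProduct.map LinearMap.id (TensorProduct.map comul LinearMap.id) =
      (TensorProduct.mk k H H 1) ∘ₗ LinearMap.mul' k H ∘ₗ TensorProduct.map (antipode k)
        ((TensorProduct.lid k H).toLinearMap ∘ₗ TensorProduct.map counit LinearMap.id) := by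
    ext a b d
    have := HopfAlgebra.mul_antipode_rTensor_comul_apply (R := k) b
    rw [LinearMap.rTensor] at this
    simp [e2, this, Algebra.algebraMap_eq_smul_one, TensorProduct.smul_tmul]
  have e4 : (TensorProduct.lid k H).toLinearMap ∘ₗ TensorProduct.map counit LinearMap.id ∘ₗ
      (comul : H →ₗ[k] H ⊗[k] H) = LinearMap.id := by
    have := Coalgebra.rTensor_counit_comp_comul (R := k) (A := H)
    rw [LinearMap.rTensor] at this
    rw [this]; ext; simp
  have e5 : (LinearMap.mul' k H) ∘ₗ TensorProduct.map (antipode k) LinearMap.id ∘ₗ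
      (comul : H →ₗ[k] H ⊗[k] H) = Algebra.linearMap k H ∘ₗ counit :=
    HopfAlgebra.mul_antipode_rTensor_comul
  have e6 : (TensorProduct.map LinearMap.id (TensorProduct.map comul LinearMap.id ∘ₗ comul) :
      H ⊗[k] H →ₗ[k] _) = TensorProduct.map LinearMap.id
        (TensorProduct.map (comul : H →ₗ[k] H ⊗[k] H) LinearMap.id) ∘ₗ
        TensorProduct.map LinearMap.id comul := by
    rw [← TensorProduct.map_comp]; rfl
  calc _ = (P ∘ₗ TensorProduct.map LinearMap.id (TensorProduct.map comul LinearMap.id)) ∘ₗ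
        TensorProduct.map LinearMap.id comul ∘ₗ (comul : H →ₗ[k] H ⊗[k] H) := by
        rw [e6, hP]; simp only [LinearMap.comp_assoc]
    _ = (TensorProduct.mk k H H 1) ∘ₗ LinearMap.mul' k H ∘ₗ TensorProduct.map (antipode k)
        LinearMap.id ∘ₗ (comul : H →ₗ[k] H ⊗[k] H) := by
        rw [e3]
        simp only [LinearMap.comp_assoc]
        rw [← LinearMap.comp_assoc (comul : H →ₗ[k] H ⊗[k] H), ← TensorProduct.map_comp]
        simp only [LinearMap.comp_assoc, e4, LinearMap.comp_id]
    _ = _ := by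
        rw [e5]; ext x
        simp [Algebra.algebraMap_eq_smul_one, Algebra.TensorProduct.one_def]
end cls

theorem comul_antipode_raw {k H : Type} [Field k] [AddCommGroup H] [Module k H]
    (mul : H →ₗ[k] H →ₗ[k] H) (one : H) (D : H →ₗ[k] H ⊗[k] H) (E : H →ₗ[k] k)
    (S : H →ₗ[k] H)
    (assoc : ∀ a b c, mul (mul a b) c = mul a (mul b c))
    (mulOne : ∀ a, mul a one = a) (oneMul : ∀ a, mul one a = a)
    (hD : (TensorProduct.assoc k H H H).toLinearMap ∘ₗ
        (TensorProduct.map D LinearMap.id) ∘ₗ D = (TensorProduct.map LinearMap.id D) ∘ₗ D)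
    (cl : (TensorProduct.lid k H).toLinearMap ∘ₗ (TensorProduct.map E LinearMap.id) ∘ₗ D =
      LinearMap.id)
    (cr : (TensorProduct.rid k H).toLinearMap ∘ₗ (TensorProduct.map LinearMap.id E) ∘ₗ D =
      LinearMap.id)
    (dmul : D ∘ₗ TensorProduct.lift mul =
      (TensorProduct.map (TensorProduct.lift mul) (TensorProduct.lift mul)) ∘ₗ
        (TensorProduct.tensorTensorTensorComm k H H H H).toLinearMap ∘ₗ
          (TensorProduct.map D D))
    (done : D one = one ⊗ₜ[k] one)
    (emul : ∀ a b, E (mul a b) = E a * E b)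
    (eone : E one = 1)
    (sl : TensorProduct.lift mul ∘ₗ (TensorProduct.map S LinearMap.id) ∘ₗ D =
      LinearMap.toSpanSingleton k H one ∘ₗ E)
    (sr : TensorProduct.lift mul ∘ₗ (TensorProduct.map LinearMap.id S) ∘ₗ D =
      LinearMap.toSpanSingleton k H one ∘ₗ E) :
    D ∘ₗ S = TensorProduct.map S S ∘ₗ (TensorProduct.comm k H H).toLinearMap ∘ₗ D := by
  let ring : Ring H :=
    { ‹AddCommGroup H› with
      mul := fun a b => mul a b
      one := one
      mul_assoc := assoc
      one_mul := oneMul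
      mul_one := mulOne
      left_distrib := fun a b c => (mul a).map_add b c
      right_distrib := fun a b c => by
        change mul (a + b) c = mul a c + mul b c
        rw [map_add]; rfl
      zero_mul := fun a => by change mul 0 a = 0; rw [map_zero]; rfl
      mul_zero := fun a => (mul a).map_zero }
  let alg : Algebra k H := Algebra.ofModule
    (fun r x y => by change mul (r • x) y = r • mul x y; rw [map_smul]; rfl)
    (fun r x y => (mul x).map_smul r y)
  have hl : (LinearMap.mul' k H) = TensorProduct.lift mul := by
    ext a b; rfl
  have hu : Algebra.linearMap k H = LinearMap.toSpanSingleton k H one := by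
    ext; simp; rfl
  let coalg : Coalgebra k H :=
    { comul := D
      counit := E
      coassoc := hD
      rTensor_counit_comp_comul := by
        apply (LinearMap.cancel_left (TensorProduct.lid k H).injective).1
        refine cl.trans ?_
        ext x; simp
      lTensor_counit_comp_comul := by
        apply (LinearMap.cancel_left (TensorProduct.rid k H).injective).1
        refine cr.trans ?_
        ext x; simp }
  let bi : Bialgebra k H := Bialgebra.mk' k H eone (fun {a b} => emul a b) done (by
    intro a b
    have := LinearMap.congr_fun dmul (a ⊗ₜ b)
    refine this.trans ?_
    have key : ∀ x y : H ⊗[k] H, (TensorProduct.map (TensorProduct.lift mul) (TensorProduct.lift mul))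
        ((TensorProduct.tensorTensorTensorComm k H H H H) (x ⊗ₜ y)) = x * y := by
      intro x y
      induction x with
      | zero => simp
      | add x x' h h' => rw [TensorProduct.add_tmul, map_add, map_add, h, h', add_mul]
      | tmul p q =>
        induction y with
        | zero => simp
        | add x x' h h' => rw [TensorProduct.tmul_add, map_add, map_add, h, h', mul_add]
        | tmul r s => rw [Algebra.TensorProduct.tmul_mul_tmul]; rfl
    exact key _ _)
  let hopf : HopfAlgebra k H :=
    { antipode := S
      mul_antipode_rTensor_comul := by rw [hl, hu]; exact sl
      mul_antipode_lTensor_comul := by rw [hl, hu]; exact sr }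
  exact comul_antipode_cls (k := k) (H := H)

theorem ordinary_trace {k H A : Type} [Field k] [AddCommGroup H] [Module k H]
    [AddCommGroup A] [Module k A]
    (mul : H →ₗ[k] H →ₗ[k] H) (one : H) (D : H →ₗ[k] H ⊗[k] H) (E : H →ₗ[k] k)
    (S : H →ₗ[k] H)
    (hD : (TensorProduct.assoc k H H H).toLinearMap ∘ₗ
        (TensorProduct.map D LinearMap.id) ∘ₗ D = (TensorProduct.map LinearMap.id D) ∘ₗ D)
    (cl : (TensorProduct.lid k H).toLinearMap ∘ₗ (TensorProduct.map E LinearMap.id) ∘ₗ D =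
      LinearMap.id)
    (sr : TensorProduct.lift mul ∘ₗ (TensorProduct.map LinearMap.id S) ∘ₗ D =
      LinearMap.toSpanSingleton k H one ∘ₗ E)
    (hS : D ∘ₗ S = TensorProduct.map S S ∘ₗ (TensorProduct.comm k H H).toLinearMap ∘ₗ D)
    (mulA : A →ₗ[k] A →ₗ[k] A) (ρ : A →ₗ[k] A ⊗[k] H)
    (hρ : (TensorProduct.assoc k A H H).toLinearMap ∘ₗ
        (TensorProduct.map ρ LinearMap.id) ∘ₗ ρ = (TensorProduct.map LinearMap.id D) ∘ₗ ρ)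
    (ρmul : ρ ∘ₗ TensorProduct.lift mulA =
      (TensorProduct.map (TensorProduct.lift mulA) (TensorProduct.lift mul)) ∘ₗ
        (TensorProduct.tensorTensorTensorComm k A H A H).toLinearMap ∘ₗ
          (TensorProduct.map ρ ρ))
    (φ : H →ₗ[k] A) (hφ : ρ ∘ₗ φ = TensorProduct.map φ LinearMap.id ∘ₗ D) :
    ρ ∘ₗ TensorProduct.lift mulA ∘ₗ TensorProduct.map LinearMap.id (φ ∘ₗ S) ∘ₗ ρ =
      (TensorProduct.mk k A H).flip one ∘ₗ TensorProduct.lift mulA ∘ₗ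
        TensorProduct.map LinearMap.id (φ ∘ₗ S) ∘ₗ ρ := by
  set P := (TensorProduct.map (TensorProduct.lift mulA) (TensorProduct.lift mul)) ∘ₗ
    (TensorProduct.tensorTensorTensorComm k A H A H).toLinearMap ∘ₗ
    TensorProduct.map LinearMap.id (TensorProduct.map (φ ∘ₗ S) S ∘ₗ
      (TensorProduct.comm k H H).toLinearMap) ∘ₗ reassoc4 k A H with hP
  have e0 : ρ ∘ₗ (φ ∘ₗ S) = (TensorProduct.map (φ ∘ₗ S) S ∘ₗ
      (TensorProduct.comm k H H).toLinearMap) ∘ₗ D := by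
    rw [← LinearMap.comp_assoc, hφ, LinearMap.comp_assoc, hS, ← LinearMap.comp_assoc,
      ← TensorProduct.map_comp, LinearMap.comp_assoc]
    simp
  have e1 : TensorProduct.map ρ (ρ ∘ₗ (φ ∘ₗ S)) =
      TensorProduct.map LinearMap.id (TensorProduct.map (φ ∘ₗ S) S ∘ₗ
      (TensorProduct.comm k H H).toLinearMap) ∘ₗ TensorProduct.map ρ D := by
    rw [e0, ← TensorProduct.map_comp]; rfl
  have e2 : ∀ (a : A) (d : H) (u : H ⊗[k] H), P (a ⊗ₜ (u ⊗ₜ d)) =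
      mulA a (φ (S d)) ⊗ₜ TensorProduct.lift mul (TensorProduct.map LinearMap.id S u) := by
    intro a d u
    induction u with
    | zero => simp
    | add x y hx hy =>
      simp only [TensorProduct.add_tmul, TensorProduct.tmul_add, map_add, hx, hy]
    | tmul b c => simp [hP, reassoc4]
  have e3 : P ∘ₗ TensorProduct.map LinearMap.id (TensorProduct.map D LinearMap.id) =
      (TensorProduct.mk k A H).flip one ∘ₗ TensorProduct.lift mulA ∘ₗ
        TensorProduct.map LinearMap.id (φ ∘ₗ S) ∘ₗ TensorProduct.map LinearMap.id
        ((TensorProduct.lid k H).toLinearMap ∘ₗ TensorProduct.map E LinearMap.id) := by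
    ext a b d
    have := LinearMap.congr_fun sr b
    simp only [LinearMap.comp_apply] at this
    simp [e2, this]
  have e6 : (TensorProduct.map LinearMap.id (TensorProduct.map D LinearMap.id ∘ₗ D) :
      A ⊗[k] H →ₗ[k] _) = TensorProduct.map LinearMap.id (TensorProduct.map D LinearMap.id) ∘ₗ
        TensorProduct.map LinearMap.id D := by
    rw [← TensorProduct.map_comp]; rfl
  have e7 : TensorProduct.map LinearMap.id ((TensorProduct.lid k H).toLinearMap ∘ₗ
      TensorProduct.map E LinearMap.id) ∘ₗ TensorProduct.map LinearMap.id D =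
      (LinearMap.id : A ⊗[k] H →ₗ[k] _) := by
    rw [← TensorProduct.map_comp, LinearMap.comp_assoc, cl]; simp
  have e8 : TensorProduct.map ρ ρ ∘ₗ TensorProduct.map LinearMap.id (φ ∘ₗ S) =
      TensorProduct.map ρ (ρ ∘ₗ (φ ∘ₗ S)) := by
    rw [← TensorProduct.map_comp]; simp
  calc _ = (ρ ∘ₗ TensorProduct.lift mulA) ∘ₗ TensorProduct.map LinearMap.id (φ ∘ₗ S) ∘ₗ ρ := by
        simp only [LinearMap.comp_assoc]
    _ = (TensorProduct.map (TensorProduct.lift mulA) (TensorProduct.lift mul)) ∘ₗ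
        (TensorProduct.tensorTensorTensorComm k A H A H).toLinearMap ∘ₗ
          (TensorProduct.map ρ ρ ∘ₗ TensorProduct.map LinearMap.id (φ ∘ₗ S)) ∘ₗ ρ := by
        rw [ρmul]; simp only [LinearMap.comp_assoc]
    _ = (P ∘ₗ TensorProduct.map LinearMap.id (TensorProduct.map D LinearMap.id)) ∘ₗ
        TensorProduct.map LinearMap.id D ∘ₗ ρ := by
        rw [e8, e1, LinearMap.comp_assoc ρ, four_lemma ρ D hD hρ, e6, hP]
        simp only [LinearMap.comp_assoc]
    _ = ((TensorProduct.mk k A H).flip one ∘ₗ TensorProduct.lift mulA ∘ₗ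
        TensorProduct.map LinearMap.id (φ ∘ₗ S)) ∘ₗ (TensorProduct.map LinearMap.id
        ((TensorProduct.lid k H).toLinearMap ∘ₗ TensorProduct.map E LinearMap.id) ∘ₗ
        TensorProduct.map LinearMap.id D) ∘ₗ ρ := by
        rw [e3]; simp only [LinearMap.comp_assoc]
    _ = _ := by
        rw [e7]; simp only [LinearMap.comp_assoc, LinearMap.id_comp]

/-- Untwisting of Hom-coassociativity. -/
theorem untwist_coassoc {k H M : Type} [Field k] [AddCommGroup H] [Module k H]
    [AddCommGroup M] [Module k M] (al : H ≃ₗ[k] H) (be : M ≃ₗ[k] M)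
    (D : H →ₗ[k] H ⊗[k] H) (ρ : M →ₗ[k] M ⊗[k] H)
    (hc : (TensorProduct.map be.symm.toLinearMap D) ∘ₗ ρ =
      (TensorProduct.assoc k M H H).toLinearMap ∘ₗ
        (TensorProduct.map ρ al.symm.toLinearMap) ∘ₗ ρ)
    (ha : ρ ∘ₗ be.toLinearMap = (TensorProduct.map be.toLinearMap al.toLinearMap) ∘ₗ ρ) :
    (TensorProduct.assoc k M H H).toLinearMap ∘ₗ
        (TensorProduct.map (ρ ∘ₗ be.toLinearMap) LinearMap.id) ∘ₗ (ρ ∘ₗ be.toLinearMap) =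
      (TensorProduct.map LinearMap.id (D ∘ₗ al.toLinearMap)) ∘ₗ (ρ ∘ₗ be.toLinearMap) := by
  have h1 : TensorProduct.map (ρ ∘ₗ be.toLinearMap) LinearMap.id =
      TensorProduct.map ρ al.symm.toLinearMap ∘ₗ
        TensorProduct.map be.toLinearMap al.toLinearMap := by
    rw [← TensorProduct.map_comp]; congr 1; ext; simp
  have h2 : TensorProduct.map LinearMap.id (D ∘ₗ al.toLinearMap) =
      TensorProduct.map be.symm.toLinearMap D ∘ₗ
        TensorProduct.map be.toLinearMap al.toLinearMap := by
    rw [← TensorProduct.map_comp]; congr 1; ext; simp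
  have h3 : TensorProduct.map be.toLinearMap al.toLinearMap ∘ₗ (ρ ∘ₗ be.toLinearMap) =
      ρ ∘ₗ be.toLinearMap ∘ₗ be.toLinearMap := by
    rw [← LinearMap.comp_assoc, ← ha, LinearMap.comp_assoc]
  rw [h1, h2, LinearMap.comp_assoc, LinearMap.comp_assoc, h3,
    ← LinearMap.comp_assoc _ ρ, ← LinearMap.comp_assoc _ ρ, hc]
  simp only [LinearMap.comp_assoc]

/-- Untwisting of multiplicativity of a coaction. -/
theorem untwist_mul {k H M : Type} [Field k] [AddCommGroup H] [Module k H]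
    [AddCommGroup M] [Module k M] (al : H ≃ₗ[k] H) (be : M ≃ₗ[k] M)
    (mulH : H →ₗ[k] H →ₗ[k] H) (mulM : M →ₗ[k] M →ₗ[k] M) (ρ : M →ₗ[k] M ⊗[k] H)
    (hH : ∀ a b, al (mulH a b) = mulH (al a) (al b))
    (hM : ∀ a b, be (mulM a b) = mulM (be a) (be b))
    (hm : ρ ∘ₗ TensorProduct.lift mulM =
      (TensorProduct.map (TensorProduct.lift mulM) (TensorProduct.lift mulH)) ∘ₗ
        (TensorProduct.tensorTensorTensorComm k M H M H).toLinearMap ∘ₗ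
          (TensorProduct.map ρ ρ))
    (ha : ρ ∘ₗ be.toLinearMap = (TensorProduct.map be.toLinearMap al.toLinearMap) ∘ₗ ρ) :
    (ρ ∘ₗ be.toLinearMap) ∘ₗ TensorProduct.lift (mulM.compr₂ be.symm.toLinearMap) =
      (TensorProduct.map (TensorProduct.lift (mulM.compr₂ be.symm.toLinearMap))
        (TensorProduct.lift (mulH.compr₂ al.symm.toLinearMap))) ∘ₗ
        (TensorProduct.tensorTensorTensorComm k M H M H).toLinearMap ∘ₗ
          (TensorProduct.map (ρ ∘ₗ be.toLinearMap) (ρ ∘ₗ be.toLinearMap)) := by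
  have h1 : be.toLinearMap ∘ₗ TensorProduct.lift (mulM.compr₂ be.symm.toLinearMap) =
      TensorProduct.lift mulM := by
    ext; simp
  have h2 : (TensorProduct.map (TensorProduct.lift (mulM.compr₂ be.symm.toLinearMap))
        (TensorProduct.lift (mulH.compr₂ al.symm.toLinearMap))) ∘ₗ
        (TensorProduct.tensorTensorTensorComm k M H M H).toLinearMap ∘ₗ
        TensorProduct.map (TensorProduct.map be.toLinearMap al.toLinearMap)
          (TensorProduct.map be.toLinearMap al.toLinearMap) =
      (TensorProduct.map (TensorProduct.lift mulM) (TensorProduct.lift mulH)) ∘ₗ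
        (TensorProduct.tensorTensorTensorComm k M H M H).toLinearMap := by
    ext a b c d; simp [← hH, ← hM]
  rw [LinearMap.comp_assoc, h1, hm, ha, TensorProduct.map_comp, ← LinearMap.comp_assoc, ← h2]
  simp only [LinearMap.comp_assoc]

/-- Untwisting of `a₍₀₎ f(a₍₁₎)`-type maps, where the legs of the coaction are twisted. -/
theorem untwist_lift {k H M N : Type} [Field k] [AddCommGroup H] [Module k H]
    [AddCommGroup M] [Module k M] [AddCommGroup N] [Module k N]
    (al : H ≃ₗ[k] H) (be : M ≃ₗ[k] M) (ga : N ≃ₗ[k] N)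
    (mulN : N →ₗ[k] N →ₗ[k] N) (ρ : M →ₗ[k] M ⊗[k] H)
    (hN : ∀ a b, ga (mulN a b) = mulN (ga a) (ga b))
    (ha : ρ ∘ₗ be.toLinearMap = (TensorProduct.map be.toLinearMap al.toLinearMap) ∘ₗ ρ)
    (f : M →ₗ[k] N) (g : H →ₗ[k] N) (hf : ∀ x, f (be x) = ga (f x))
    (hg : ∀ x, g (al x) = ga (g x)) :
    TensorProduct.lift (mulN.compr₂ ga.symm.toLinearMap) ∘ₗ TensorProduct.map f g ∘ₗ
        (ρ ∘ₗ be.toLinearMap) =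
      TensorProduct.lift mulN ∘ₗ TensorProduct.map f g ∘ₗ ρ := by
  have h : TensorProduct.lift (mulN.compr₂ ga.symm.toLinearMap) ∘ₗ TensorProduct.map f g ∘ₗ
      TensorProduct.map be.toLinearMap al.toLinearMap =
      TensorProduct.lift mulN ∘ₗ TensorProduct.map f g := by
    ext a b; simp [hf, hg, ← hN]
  rw [ha, ← LinearMap.comp_assoc _ _ (TensorProduct.lift mulN), ← h]
  simp only [LinearMap.comp_assoc]

/-! STATEMENT 11: Given a total integral `φ : H → A`, the map
`t(a) = a₍₀₎ φ(S(a₍₁₎))` takes values in the coinvariants `B = A^{co H}`. -/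
theorem statement11
    (k : Type) [Field k] (H : Type) [AddCommGroup H] [Module k H]
    (Hh : MonoidalHomHopf k H)
    (A : Type) [AddCommGroup A] [Module k A]
    (Ac : HomComoduleAlgebra Hh.toMonoidalHomBialgebra A)
    (φ : H →ₗ[k] A) (hφ : IsTotalIntegral Ac φ)
    (t : A →ₗ[k] A)
    -- t(a) = a₍₀₎ · φ(S(a₍₁₎))
    (ht : t =
      (TensorProduct.lift Ac.mul) ∘ₗ
        (TensorProduct.map LinearMap.id (φ ∘ₗ Hh.antipode)) ∘ₗ Ac.coact) :
    ∀ a : A, Ac.coact (t a) = Ac.aut.symm (t a) ⊗ₜ[k] Hh.one := by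
  have hφ1 : ∀ x, φ (Hh.aut x) = Ac.aut (φ x) := fun x => LinearMap.congr_fun hφ.1 x
  have hS1 : ∀ x, Hh.antipode (Hh.aut x) = Hh.aut (Hh.antipode x) :=
    fun x => LinearMap.congr_fun Hh.antipode_aut x
  have hassoc : ∀ a b c : H, Hh.aut.symm (Hh.mul (Hh.aut.symm (Hh.mul a b)) c) =
      Hh.aut.symm (Hh.mul a (Hh.aut.symm (Hh.mul b c))) := by
    intro a b c
    apply Hh.aut.injective
    apply Hh.aut.injective
    simp [Hh.aut_mul, Hh.hom_assoc]
  have hD := untwist_coassoc Hh.aut Hh.aut Hh.comul Hh.comul Hh.coassoc.symm Hh.comul_aut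
  have cl : (TensorProduct.lid k H).toLinearMap ∘ₗ (TensorProduct.map Hh.counit LinearMap.id) ∘ₗ
      (Hh.comul ∘ₗ Hh.aut.toLinearMap) = LinearMap.id := by
    have := congrArg (fun f => f ∘ₗ Hh.aut.toLinearMap) Hh.counit_left
    simp only [LinearMap.comp_assoc] at this
    rw [this]; ext; simp
  have cr : (TensorProduct.rid k H).toLinearMap ∘ₗ (TensorProduct.map LinearMap.id Hh.counit) ∘ₗ
      (Hh.comul ∘ₗ Hh.aut.toLinearMap) = LinearMap.id := by
    have := congrArg (fun f => f ∘ₗ Hh.aut.toLinearMap) Hh.counit_right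
    simp only [LinearMap.comp_assoc] at this
    rw [this]; ext; simp
  have hca : ∀ x, Hh.counit (Hh.aut.symm x) = Hh.counit x := by
    intro x
    have := LinearMap.congr_fun Hh.counit_aut (Hh.aut.symm x)
    simpa using this.symm
  have sl := (untwist_lift Hh.aut Hh.aut Hh.aut Hh.mul Hh.comul Hh.aut_mul Hh.comul_aut
    Hh.antipode LinearMap.id hS1 (fun _ => rfl)).trans Hh.antipode_mul_left
  have sr := (untwist_lift Hh.aut Hh.aut Hh.aut Hh.mul Hh.comul Hh.aut_mul Hh.comul_aut
    LinearMap.id Hh.antipode (fun _ => rfl) hS1).trans Hh.antipode_mul_right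
  have hS := comul_antipode_raw (Hh.mul.compr₂ Hh.aut.symm.toLinearMap) Hh.one
    (Hh.comul ∘ₗ Hh.aut.toLinearMap) Hh.counit Hh.antipode
    hassoc (fun a => by simp [Hh.mulOne]) (fun a => by simp [Hh.oneMul]) hD cl cr
    (untwist_mul Hh.aut Hh.aut Hh.mul Hh.mul Hh.comul Hh.aut_mul Hh.aut_mul Hh.comul_mul
      Hh.comul_aut)
    (by simp [Hh.aut_one, Hh.comul_one])
    (fun a b => by simp [hca, Hh.counit_mul]) Hh.counit_one sl sr
  have main := ordinary_trace (Hh.mul.compr₂ Hh.aut.symm.toLinearMap) Hh.one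
    (Hh.comul ∘ₗ Hh.aut.toLinearMap) Hh.counit Hh.antipode hD cl sr hS
    (Ac.mul.compr₂ Ac.aut.symm.toLinearMap) (Ac.coact ∘ₗ Ac.aut.toLinearMap)
    (untwist_coassoc Hh.aut Ac.aut Hh.comul Ac.coact Ac.coassoc Ac.coact_aut)
    (untwist_mul Hh.aut Ac.aut Hh.mul Ac.mul Ac.coact Hh.aut_mul Ac.aut_mul Ac.coact_mul
      Ac.coact_aut)
    φ (by
      rw [LinearMap.comp_assoc, ← hφ.1, ← LinearMap.comp_assoc, hφ.2.1, LinearMap.comp_assoc])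
  rw [untwist_lift Hh.aut Ac.aut Ac.aut Ac.mul Ac.coact Ac.aut_mul Ac.coact_aut LinearMap.id
    (φ ∘ₗ Hh.antipode) (fun _ => rfl) (fun x => by simp [hS1, hφ1]), ← ht, Ac.coact_aut] at main
  intro a
  have h1 := congrArg (TensorProduct.map Ac.aut.symm.toLinearMap Hh.aut.symm.toLinearMap)
    (LinearMap.congr_fun main a)
  have h2 : TensorProduct.map Ac.aut.symm.toLinearMap Hh.aut.symm.toLinearMap ∘ₗ
      TensorProduct.map Ac.aut.toLinearMap Hh.aut.toLinearMap = LinearMap.id := by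
    ext; simp
  have h3 := LinearMap.congr_fun h2 (Ac.coact (t a))
  simp only [LinearMap.comp_apply, LinearMap.id_apply] at h1 h3
  rw [h3] at h1
  rw [h1]
  have h4 : Hh.aut.symm Hh.one = Hh.one := by
    rw [LinearEquiv.symm_apply_eq, Hh.aut_one]
  simp [h4]
end

section
/- Let (H,α) be a monoidal Hom-Hopf algebra, (A,β) a right (H,α)-Hom-comodule algebra admitting a total integral φ:H→A, and B=A^{coH}. Then for every right (B,β|_B)-Hom-module (M,μ), the adjunction unit η_M: M → (M⊗_B A)^{coH}, η_M(m)=μ⁻¹(m)⊗1_A, is bijective, with inverse φ_M: (M⊗_B A)^{coH} → M given by φ_M(m⊗a)=m·t(a), where t(a)=a₍₀₎φ(S(a₍₁₎))∈B. -/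
open TensorProduct

section HopfAux
open LinearMap WithConv Coalgebra Bialgebra HopfAlgebra

/-- In an ordinary Hopf algebra the antipode is anti-comultiplicative. -/
theorem aux_antipode_comul (k : Type) [Field k] (H : Type) [Ring H] [HopfAlgebra k H] :
    (comul : H →ₗ[k] H ⊗[k] H) ∘ₗ antipode k =
      TensorProduct.map (antipode k) (antipode k) ∘ₗ
        (TensorProduct.comm k H H).toLinearMap ∘ₗ comul := by
  let i1 : H →ₐ[k] H ⊗[k] H := Algebra.TensorProduct.includeLeft
  let i2 : H →ₐ[k] H ⊗[k] H := Algebra.TensorProduct.includeRight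
  have key : ∀ f : H →ₐ[k] H ⊗[k] H,
      toConv (f.toLinearMap ∘ₗ antipode k) * toConv f.toLinearMap = 1 ∧
      toConv f.toLinearMap * toConv (f.toLinearMap ∘ₗ antipode k) = 1 := by
    intro f
    have h1 := LinearMap.algHom_comp_convMul_distrib f (toConv (antipode k (A := H))) (toConv LinearMap.id)
    have h2 := LinearMap.algHom_comp_convMul_distrib f (toConv LinearMap.id) (toConv (antipode k (A := H)))
    rw [antipode_mul_id] at h1
    rw [id_mul_antipode] at h2
    have h3 : (toConv ((f : H →ₗ[k] H ⊗[k] H) ∘ₗ (1 : WithConv (H →ₗ[k] H)).ofConv)) = 1 := by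
      ext x
      simp
    constructor
    · exact (congrArg toConv h1).symm.trans h3
    · exact (congrArg toConv h2).symm.trans h3
  have hΔ : toConv (comul : H →ₗ[k] H ⊗[k] H) = toConv i1.toLinearMap * toConv i2.toLinearMap := by
    rw [LinearMap.convMul_def]
    congr 1
    have : LinearMap.mul' k (H ⊗[k] H) ∘ₗ TensorProduct.map i1.toLinearMap i2.toLinearMap = LinearMap.id := by
      ext x y
      simp [i1, i2]
    rw [← LinearMap.comp_assoc]
    change _ = (LinearMap.mul' k (H ⊗[k] H) ∘ₗ TensorProduct.map i1.toLinearMap i2.toLinearMap) ∘ₗ _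
    rw [this]; rfl
  have hG : toConv (TensorProduct.map (antipode k) (antipode k) ∘ₗ
        (TensorProduct.comm k H H).toLinearMap ∘ₗ (comul : H →ₗ[k] H ⊗[k] H)) =
      toConv (i2.toLinearMap ∘ₗ antipode k) * toConv (i1.toLinearMap ∘ₗ antipode k) := by
    rw [LinearMap.convMul_def]
    congr 1
    have : LinearMap.mul' k (H ⊗[k] H) ∘ₗ TensorProduct.map (i2.toLinearMap ∘ₗ antipode k)
        (i1.toLinearMap ∘ₗ antipode k) = TensorProduct.map (antipode k) (antipode k) ∘ₗ
        (TensorProduct.comm k H H).toLinearMap := by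
      ext x y
      simp [i1, i2]
    rw [← LinearMap.comp_assoc, ← this]
    rfl
  have hleft : toConv ((comul : H →ₗ[k] H ⊗[k] H) ∘ₗ antipode k) *
      toConv (comul : H →ₗ[k] H ⊗[k] H) = 1 := (key (comulAlgHom k H)).1
  have hright : toConv (comul : H →ₗ[k] H ⊗[k] H) *
      toConv (TensorProduct.map (antipode k) (antipode k) ∘ₗ
        (TensorProduct.comm k H H).toLinearMap ∘ₗ (comul : H →ₗ[k] H ⊗[k] H)) = 1 := by
    rw [hG, hΔ]
    rw [mul_assoc, ← mul_assoc (toConv i2.toLinearMap), (key i2).2, one_mul, (key i1).2]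
  exact toConv_injective (left_inv_eq_right_inv hleft hright)

end HopfAux

section HomAux

variable {k : Type} [Field k] {H : Type} [AddCommGroup H] [Module k H]

/-- The untwisted ring structure. -/
abbrev auxRing (Hh : MonoidalHomHopf k H) : Ring H :=
  { ‹AddCommGroup H› with
    mul := fun a b => Hh.aut.symm (Hh.mul a b)
    one := Hh.one
    left_distrib := fun a b c => by
      change Hh.aut.symm (Hh.mul a (b + c)) = Hh.aut.symm (Hh.mul a b) + Hh.aut.symm (Hh.mul a c)
      simp
    right_distrib := fun a b c => by
      change Hh.aut.symm (Hh.mul (a + b) c) = Hh.aut.symm (Hh.mul a c) + Hh.aut.symm (Hh.mul b c)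
      simp
    zero_mul := fun a => by
      change Hh.aut.symm (Hh.mul 0 a) = 0
      simp
    mul_zero := fun a => by
      change Hh.aut.symm (Hh.mul a 0) = 0
      simp
    mul_assoc := fun a b c => by
      change Hh.aut.symm (Hh.mul (Hh.aut.symm (Hh.mul a b)) c) =
        Hh.aut.symm (Hh.mul a (Hh.aut.symm (Hh.mul b c)))
      congr 1
      apply Hh.aut.injective
      rw [Hh.aut_mul, Hh.aut_mul]
      simp [Hh.hom_assoc]
    one_mul := fun a => by
      change Hh.aut.symm (Hh.mul Hh.one a) = a
      simp [Hh.oneMul]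
    mul_one := fun a => by
      change Hh.aut.symm (Hh.mul a Hh.one) = a
      simp [Hh.mulOne] }

/-- The untwisted algebra structure. -/
abbrev auxAlgebra (Hh : MonoidalHomHopf k H) :
    letI := auxRing Hh
    Algebra k H :=
  letI := auxRing Hh
  Algebra.ofModule (R := k) (A := H)
    (fun r x y => by
      change Hh.aut.symm (Hh.mul (r • x) y) = r • Hh.aut.symm (Hh.mul x y)
      simp)
    (fun r x y => by
      change Hh.aut.symm (Hh.mul x (r • y)) = r • Hh.aut.symm (Hh.mul x y)
      simp)

theorem aux_comul_aut (Hh : MonoidalHomHopf k H) (x : H) :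
    TensorProduct.map Hh.aut.toLinearMap Hh.aut.toLinearMap (Hh.comul x) = Hh.comul (Hh.aut x) :=
  (LinearMap.congr_fun Hh.comul_aut x).symm

/-- The untwisted coalgebra structure. -/
abbrev auxCoalgebra (Hh : MonoidalHomHopf k H) : Coalgebra k H where
  comul := Hh.comul ∘ₗ Hh.aut.toLinearMap
  counit := Hh.counit
  coassoc := by
    ext x
    have h := LinearMap.congr_fun Hh.coassoc (Hh.aut (Hh.aut x))
    simp only [LinearMap.comp_apply] at h
    rw [← aux_comul_aut] at h
    have e1 : ∀ z : H ⊗[k] H, TensorProduct.map Hh.comul Hh.aut.symm.toLinearMap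
        (TensorProduct.map Hh.aut.toLinearMap Hh.aut.toLinearMap z) =
        TensorProduct.map (Hh.comul ∘ₗ Hh.aut.toLinearMap) LinearMap.id z := by
      intro z
      induction z with
      | zero => simp
      | add x y hx hy => simp only [map_add, hx, hy]
      | tmul x y => simp
    have e2 : ∀ z : H ⊗[k] H, TensorProduct.map Hh.aut.symm.toLinearMap Hh.comul
        (TensorProduct.map Hh.aut.toLinearMap Hh.aut.toLinearMap z) =
        TensorProduct.map LinearMap.id (Hh.comul ∘ₗ Hh.aut.toLinearMap) z := by
      intro z
      induction z with
      | zero => simp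
      | add x y hx hy => simp only [map_add, hx, hy]
      | tmul x y => simp
    rw [e1, e2] at h
    exact h
  rTensor_counit_comp_comul := by
    ext x
    have h := LinearMap.congr_fun Hh.counit_left (Hh.aut x)
    apply (TensorProduct.lid k H).injective
    simpa [LinearMap.rTensor] using h
  lTensor_counit_comp_comul := by
    ext x
    have h := LinearMap.congr_fun Hh.counit_right (Hh.aut x)
    apply (TensorProduct.rid k H).injective
    simpa [LinearMap.lTensor] using h

abbrev auxBialgebra (Hh : MonoidalHomHopf k H) :
    letI := auxRing Hh
    Bialgebra k H :=
  letI := auxRing Hh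
  letI := auxAlgebra Hh
  letI := auxCoalgebra Hh
  Bialgebra.mk' k H Hh.counit_one
    (fun {a b} => by
      change Hh.counit (Hh.aut.symm (Hh.mul a b)) = Hh.counit a * Hh.counit b
      rw [← Hh.counit_mul]
      have h := LinearMap.congr_fun Hh.counit_aut (Hh.aut.symm (Hh.mul a b))
      simpa using h.symm)
    (by
      change Hh.comul (Hh.aut Hh.one) = Hh.one ⊗ₜ[k] Hh.one
      rw [Hh.aut_one, Hh.comul_one])
    (fun {a b} => by
      change Hh.comul (Hh.aut (Hh.aut.symm (Hh.mul a b))) =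
        (Hh.comul (Hh.aut a) * Hh.comul (Hh.aut b) : H ⊗[k] H)
      rw [LinearEquiv.apply_symm_apply, ← aux_comul_aut, ← aux_comul_aut]
      have h := LinearMap.congr_fun Hh.comul_mul (a ⊗ₜ[k] b)
      simp only [LinearMap.comp_apply, TensorProduct.lift.tmul, TensorProduct.map_tmul] at h
      rw [h]
      generalize Hh.comul a = x
      generalize Hh.comul b = y
      induction x with
      | zero => simp
      | add x x' hx hx' => simp only [TensorProduct.add_tmul, map_add, add_mul, hx, hx']
      | tmul x x' =>
        induction y with
        | zero => simp
        | add y y' hy hy' => simp only [TensorProduct.tmul_add, map_add, mul_add, hy, hy']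
        | tmul y y' =>
          simp only [TensorProduct.map_tmul, LinearEquiv.coe_coe,
            TensorProduct.tensorTensorTensorComm_tmul, TensorProduct.lift.tmul,
            Algebra.TensorProduct.tmul_mul_tmul]
          change _ = Hh.aut.symm (Hh.mul (Hh.aut x) (Hh.aut y)) ⊗ₜ[k]
            Hh.aut.symm (Hh.mul (Hh.aut x') (Hh.aut y'))
          rw [← Hh.aut_mul, ← Hh.aut_mul]
          simp)

theorem aux_mul' (Hh : MonoidalHomHopf k H) (z : H ⊗[k] H) :
    letI := auxRing Hh
    letI := auxAlgebra Hh
    LinearMap.mul' k H z = Hh.aut.symm (TensorProduct.lift Hh.mul z) := by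
  letI := auxRing Hh
  letI := auxAlgebra Hh
  induction z with
  | zero => simp
  | add x y hx hy => simp only [map_add, hx, hy]
  | tmul x y => rfl

theorem aux_counit_aut (Hh : MonoidalHomHopf k H) (x : H) :
    Hh.counit (Hh.aut x) = Hh.counit x := LinearMap.congr_fun Hh.counit_aut x

abbrev auxHopf (Hh : MonoidalHomHopf k H) :
    letI := auxRing Hh
    HopfAlgebra k H :=
  letI := auxRing Hh
  { auxBialgebra Hh with
    antipode := Hh.antipode
    mul_antipode_rTensor_comul := by
      letI := auxAlgebra Hh
      ext x
      have h := LinearMap.congr_fun Hh.antipode_mul_left (Hh.aut x)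
      refine (aux_mul' Hh _).trans ((congrArg Hh.aut.symm h).trans ?_)
      apply Hh.aut.injective
      change Hh.aut (Hh.aut.symm (Hh.counit (Hh.aut x) • Hh.one)) = Hh.aut (Hh.counit x • Hh.one)
      rw [aux_counit_aut, LinearEquiv.apply_symm_apply, map_smul, Hh.aut_one]
    mul_antipode_lTensor_comul := by
      letI := auxAlgebra Hh
      ext x
      have h := LinearMap.congr_fun Hh.antipode_mul_right (Hh.aut x)
      refine (aux_mul' Hh _).trans ((congrArg Hh.aut.symm h).trans ?_)
      apply Hh.aut.injective
      change Hh.aut (Hh.aut.symm (Hh.counit (Hh.aut x) • Hh.one)) = Hh.aut (Hh.counit x • Hh.one)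
      rw [aux_counit_aut, LinearEquiv.apply_symm_apply, map_smul, Hh.aut_one] }

theorem aux_antipode_aut (Hh : MonoidalHomHopf k H) (x : H) :
    Hh.antipode (Hh.aut x) = Hh.aut (Hh.antipode x) := LinearMap.congr_fun Hh.antipode_aut x

/-- Anti-comultiplicativity of the antipode of a monoidal Hom-Hopf algebra. -/
theorem aux_comul_antipode (Hh : MonoidalHomHopf k H) (x : H) :
    Hh.comul (Hh.antipode x) =
      TensorProduct.map Hh.antipode Hh.antipode (TensorProduct.comm k H H (Hh.comul x)) := by
  letI := auxRing Hh
  letI := auxHopf Hh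
  have h := LinearMap.congr_fun (aux_antipode_comul k H) (Hh.aut.symm x)
  have h' : Hh.comul (Hh.aut (Hh.antipode (Hh.aut.symm x))) =
      TensorProduct.map Hh.antipode Hh.antipode
        (TensorProduct.comm k H H (Hh.comul (Hh.aut (Hh.aut.symm x)))) := h
  rwa [← aux_antipode_aut, LinearEquiv.apply_symm_apply] at h'

theorem aux_antipode_one (Hh : MonoidalHomHopf k H) : Hh.antipode Hh.one = Hh.one := by
  have h := LinearMap.congr_fun Hh.antipode_mul_left Hh.one
  simp [Hh.comul_one, Hh.counit_one, Hh.mulOne] at h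
  apply Hh.aut.injective
  rw [h, Hh.aut_one]

variable {A : Type} [AddCommGroup A] [Module k A]

section coinv
variable {Hh : MonoidalHomHopf k H} (Ac : HomComoduleAlgebra Hh.toMonoidalHomBialgebra A)

theorem aux_coact_aut (x : A) :
    Ac.coact (Ac.aut x) =
      TensorProduct.map Ac.aut.toLinearMap Hh.aut.toLinearMap (Ac.coact x) :=
  LinearMap.congr_fun Ac.coact_aut x

theorem aux_aut_mem {b : A} (hb : b ∈ coinvA Ac) : Ac.aut b ∈ coinvA Ac := by
  change Ac.coact b = _ at hb
  change Ac.coact (Ac.aut b) = Ac.aut.symm (Ac.aut b) ⊗ₜ[k] Hh.one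
  rw [aux_coact_aut, hb]
  simp [Hh.aut_one]

theorem aux_symm_mem {b : A} (hb : b ∈ coinvA Ac) : Ac.aut.symm b ∈ coinvA Ac := by
  change Ac.coact b = _ at hb
  change Ac.coact (Ac.aut.symm b) = Ac.aut.symm (Ac.aut.symm b) ⊗ₜ[k] Hh.one
  have h := aux_coact_aut Ac (Ac.aut.symm b)
  rw [LinearEquiv.apply_symm_apply, hb] at h
  apply (TensorProduct.congr Ac.aut Hh.aut).injective
  refine Eq.trans h.symm ?_
  simp [Hh.aut_one]

/-- `(c ⊗ g) ⊗ (h ⊗ l) ↦ c φ(S l) ⊗ g S(h)`. -/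
def auxP (φ : H →ₗ[k] A) : (A ⊗[k] H) ⊗[k] (H ⊗[k] H) →ₗ[k] A ⊗[k] H :=
  TensorProduct.map (TensorProduct.lift Ac.mul) (TensorProduct.lift Hh.mul) ∘ₗ
    (TensorProduct.tensorTensorTensorComm k A H A H).toLinearMap ∘ₗ
      TensorProduct.map LinearMap.id
        (TensorProduct.map (φ ∘ₗ Hh.antipode) Hh.antipode ∘ₗ
          (TensorProduct.comm k H H).toLinearMap)

theorem auxP_tmul (φ : H →ₗ[k] A) (c : A) (g h l : H) :
    auxP Ac φ ((c ⊗ₜ[k] g) ⊗ₜ[k] (h ⊗ₜ[k] l)) =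
      Ac.mul c (φ (Hh.antipode l)) ⊗ₜ[k] Hh.mul g (Hh.antipode h) := by
  simp [auxP]

theorem aux_step1 (φ : H →ₗ[k] A) (hφ : IsTotalIntegral Ac φ) (c : A) (h : H) :
    Ac.coact (Ac.mul c (φ (Hh.antipode h))) = auxP Ac φ (Ac.coact c ⊗ₜ[k] Hh.comul h) := by
  have h1 := LinearMap.congr_fun Ac.coact_mul (c ⊗ₜ[k] φ (Hh.antipode h))
  have h2 := LinearMap.congr_fun hφ.2.1 (Hh.antipode h)
  simp only [LinearMap.comp_apply, TensorProduct.lift.tmul, TensorProduct.map_tmul] at h1 h2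
  rw [h1, h2, aux_comul_antipode]
  simp only [auxP, LinearMap.comp_apply, TensorProduct.map_tmul, LinearMap.id_apply]
  congr 3
  simp only [← LinearMap.comp_apply, ← TensorProduct.map_comp, LinearMap.id_comp]
  simp

/-- `g ⊗ (h ⊗ l) ↦ c φ(S(α l)) ⊗ α(g) S(α h)`. -/
def auxU (φ : H →ₗ[k] A) (c : A) : H ⊗[k] (H ⊗[k] H) →ₗ[k] A ⊗[k] H :=
  auxP Ac φ ∘ₗ (TensorProduct.assoc k A H (H ⊗[k] H)).symm.toLinearMap ∘ₗ
    TensorProduct.mk k A (H ⊗[k] (H ⊗[k] H)) c ∘ₗ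
      TensorProduct.map Hh.aut.toLinearMap
        (TensorProduct.map Hh.aut.toLinearMap Hh.aut.toLinearMap)

theorem auxU_tmul (φ : H →ₗ[k] A) (c : A) (g h l : H) :
    auxU Ac φ c (g ⊗ₜ[k] (h ⊗ₜ[k] l)) =
      Ac.mul c (φ (Hh.antipode (Hh.aut l))) ⊗ₜ[k]
        Hh.aut (Hh.mul g (Hh.antipode h)) := by
  simp [auxU, auxP_tmul, Hh.aut_mul, aux_antipode_aut]

theorem auxU_assoc (φ : H →ₗ[k] A) (c : A) (g l : H) :
    auxU Ac φ c (TensorProduct.assoc k H H H (Hh.comul g ⊗ₜ[k] Hh.aut.symm l)) =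
      Ac.mul c (φ (Hh.antipode (Hh.counit g • l))) ⊗ₜ[k] Hh.one := by
  have key : ∀ z : H ⊗[k] H,
      auxU Ac φ c (TensorProduct.assoc k H H H (z ⊗ₜ[k] Hh.aut.symm l)) =
        Ac.mul c (φ (Hh.antipode l)) ⊗ₜ[k]
          Hh.aut (TensorProduct.lift Hh.mul (TensorProduct.map LinearMap.id Hh.antipode z)) := by
    intro z
    induction z with
    | zero => simp
    | add x y hx hy => simp only [TensorProduct.add_tmul, TensorProduct.tmul_add, map_add, hx, hy]
    | tmul x y => simp [auxU_tmul]
  rw [key]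
  have h := LinearMap.congr_fun Hh.antipode_mul_right g
  simp only [LinearMap.comp_apply] at h
  rw [h]
  simp [Hh.aut_one, TensorProduct.smul_tmul']

theorem aux_step2 (φ : H →ₗ[k] A) (c : A) (h : H) :
    auxU Ac φ c (TensorProduct.map Hh.aut.symm.toLinearMap Hh.comul (Hh.comul h)) =
      Ac.mul c (φ (Hh.antipode (Hh.aut.symm h))) ⊗ₜ[k] Hh.one := by
  have h1 := LinearMap.congr_fun Hh.coassoc h
  simp only [LinearMap.comp_apply] at h1
  rw [← h1]
  have key : ∀ z : H ⊗[k] H,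
      auxU Ac φ c (TensorProduct.assoc k H H H
          (TensorProduct.map Hh.comul Hh.aut.symm.toLinearMap z)) =
        Ac.mul c (φ (Hh.antipode
          (TensorProduct.lid k H (TensorProduct.map Hh.counit LinearMap.id z)))) ⊗ₜ[k] Hh.one := by
    intro z
    induction z with
    | zero => simp
    | add x y hx hy => simp only [TensorProduct.add_tmul, map_add, hx, hy]
    | tmul x y =>
      rw [TensorProduct.map_tmul]
      exact (auxU_assoc Ac φ c x y).trans (by simp)
  refine (key _).trans ?_
  have h2 := LinearMap.congr_fun Hh.counit_left h
  simp only [LinearMap.comp_apply, LinearEquiv.coe_coe] at h2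
  rw [h2]

theorem aux_t_mem (φ : H →ₗ[k] A) (hφ : IsTotalIntegral Ac φ) (a : A) :
    (TensorProduct.lift Ac.mul) (TensorProduct.map LinearMap.id (φ ∘ₗ Hh.antipode) (Ac.coact a))
      ∈ coinvA Ac := by
  change Ac.coact _ = Ac.aut.symm _ ⊗ₜ[k] Hh.one
  have s1 : ∀ z : A ⊗[k] H, Ac.coact (TensorProduct.lift Ac.mul
      (TensorProduct.map LinearMap.id (φ ∘ₗ Hh.antipode) z)) =
      auxP Ac φ (TensorProduct.map LinearMap.id (Hh.comul ∘ₗ Hh.aut.toLinearMap)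
        (TensorProduct.map Ac.coact Hh.aut.symm.toLinearMap z)) := by
    intro z
    induction z with
    | zero => simp
    | add x y hx hy => simp only [map_add, hx, hy]
    | tmul x y => simpa using aux_step1 Ac φ hφ x y
  rw [s1]
  have h1 := LinearMap.congr_fun Ac.coassoc a
  simp only [LinearMap.comp_apply, LinearEquiv.coe_coe] at h1
  rw [← LinearEquiv.symm_apply_eq] at h1
  rw [← h1]
  have s2 : ∀ z : A ⊗[k] H, auxP Ac φ
      (TensorProduct.map LinearMap.id (Hh.comul ∘ₗ Hh.aut.toLinearMap)
        ((TensorProduct.assoc k A H H).symm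
          (TensorProduct.map Ac.aut.symm.toLinearMap Hh.comul z))) =
      Ac.aut.symm (TensorProduct.lift Ac.mul
        (TensorProduct.map LinearMap.id (φ ∘ₗ Hh.antipode) z)) ⊗ₜ[k] Hh.one := by
    intro z
    induction z with
    | zero => simp
    | add x y hx hy => simp only [TensorProduct.add_tmul, map_add, hx, hy]
    | tmul x y =>
      have e : Ac.aut.symm (Ac.mul x (φ (Hh.antipode y))) =
          Ac.mul (Ac.aut.symm x) (φ (Hh.antipode (Hh.aut.symm y))) := by
        apply Ac.aut.injective
        have h3 := LinearMap.congr_fun hφ.1 (Hh.antipode (Hh.aut.symm y))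
        simp only [LinearMap.comp_apply, LinearEquiv.coe_coe] at h3
        rw [Ac.aut_mul, ← h3, ← aux_antipode_aut]
        simp
      simp only [TensorProduct.map_tmul, TensorProduct.lift.tmul, LinearMap.id_apply,
        LinearMap.comp_apply, LinearEquiv.coe_coe]
      rw [e, ← aux_step2]
      generalize Hh.comul y = w
      induction w with
      | zero => simp
      | add x y hx hy => simp only [TensorProduct.tmul_add, map_add, hx, hy]
      | tmul g l =>
        simp [auxU, ← aux_comul_aut]
  exact s2 _

end coinv

end HomAux

/-! STATEMENT 12: If there is a total integral `φ`, then for every right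
`B`-Hom-module `M` the adjunction unit `η_M : M → (M ⊗_B A)^{co H}` is bijective,
with inverse `φ_M(m ⊗ a) = m · t(a)`, `t(a) = a₍₀₎ φ(S(a₍₁₎)) ∈ B`. -/
theorem statement12
    (k : Type) [Field k] (H : Type) [AddCommGroup H] [Module k H]
    (Hh : MonoidalHomHopf k H)
    (A : Type) [AddCommGroup A] [Module k A]
    (Ac : HomComoduleAlgebra Hh.toMonoidalHomBialgebra A)
    (φ : H →ₗ[k] A) (hφ : IsTotalIntegral Ac φ)
    (t : A →ₗ[k] A)
    (ht : t =
      (TensorProduct.lift Ac.mul) ∘ₗ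
        (TensorProduct.map LinearMap.id (φ ∘ₗ Hh.antipode)) ∘ₗ Ac.coact)
    (M : Type) [AddCommGroup M] [Module k M]
    (S : HomModuleOn Ac (coinvA Ac) M) :
    -- t takes values in B
    (∀ a : A, t a ∈ coinvA Ac) ∧
    -- η_M is bijective with inverse φ_M(m⊗a) = m·t(a)
    (∀ (ρbar : ((M ⊗[k] A) ⧸ relSubR Ac.mul Ac.aut (coinvA Ac) S.act S.aut) →ₗ[k]
          ((M ⊗[k] A) ⧸ relSubR Ac.mul Ac.aut (coinvA Ac) S.act S.aut) ⊗[k] H)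
      (θ : ((M ⊗[k] A) ⧸ relSubR Ac.mul Ac.aut (coinvA Ac) S.act S.aut) →ₗ[k]
          ((M ⊗[k] A) ⧸ relSubR Ac.mul Ac.aut (coinvA Ac) S.act S.aut))
      (φbar : ((M ⊗[k] A) ⧸ relSubR Ac.mul Ac.aut (coinvA Ac) S.act S.aut) →ₗ[k] M),
      ρbar ∘ₗ (relSubR Ac.mul Ac.aut (coinvA Ac) S.act S.aut).mkQ =
        (TensorProduct.map (relSubR Ac.mul Ac.aut (coinvA Ac) S.act S.aut).mkQ
          LinearMap.id) ∘ₗ quotCoactPreR Ac S.aut →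
      θ ∘ₗ (relSubR Ac.mul Ac.aut (coinvA Ac) S.act S.aut).mkQ =
        (relSubR Ac.mul Ac.aut (coinvA Ac) S.act S.aut).mkQ ∘ₗ
          TensorProduct.map S.aut.symm.toLinearMap Ac.aut.symm.toLinearMap →
      -- φbar is induced by φ_M-pre : m ⊗ a ↦ m · t(a)
      φbar ∘ₗ (relSubR Ac.mul Ac.aut (coinvA Ac) S.act S.aut).mkQ =
        (TensorProduct.lift S.act) ∘ₗ (TensorProduct.map LinearMap.id t) →
      -- the unit lands in the coinvariants
      ((∀ m : M,
          ρbar ((relSubR Ac.mul Ac.aut (coinvA Ac) S.act S.aut).mkQ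
              (S.aut.symm m ⊗ₜ[k] Ac.one)) =
            θ ((relSubR Ac.mul Ac.aut (coinvA Ac) S.act S.aut).mkQ
              (S.aut.symm m ⊗ₜ[k] Ac.one)) ⊗ₜ[k] Hh.one) ∧
        -- φ_M ∘ η_M = id
        (∀ m : M,
          φbar ((relSubR Ac.mul Ac.aut (coinvA Ac) S.act S.aut).mkQ
            (S.aut.symm m ⊗ₜ[k] Ac.one)) = m) ∧
        -- η_M ∘ φ_M = id on the coinvariants
        (∀ x, ρbar x = θ x ⊗ₜ[k] Hh.one →
          (relSubR Ac.mul Ac.aut (coinvA Ac) S.act S.aut).mkQ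
            (S.aut.symm (φbar x) ⊗ₜ[k] Ac.one) = x))) := by
  have htm : ∀ a : A, t a ∈ coinvA Ac := by
    intro a
    rw [ht]
    exact aux_t_mem Ac φ hφ a
  refine ⟨htm, ?_⟩
  intro ρbar θ φbar hρ hθ hφb
  have hρ' := fun z => LinearMap.congr_fun hρ z
  have hθ' := fun z => LinearMap.congr_fun hθ z
  have hφ' := fun z => LinearMap.congr_fun hφb z
  simp only [LinearMap.comp_apply] at hρ' hθ' hφ'
  have h1 : Ac.aut.symm Ac.one = Ac.one := by
    rw [LinearEquiv.symm_apply_eq, Ac.aut_one]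
  have hS1 : φ (Hh.antipode Hh.one) = Ac.one := by
    rw [aux_antipode_one]; exact hφ.2.2
  refine ⟨?_, ?_, ?_⟩
  · intro m
    rw [hρ', hθ']
    simp [quotCoactPreR, Ac.coact_one, Hh.aut_one, h1]
  · intro m
    rw [hφ', ht]
    simp [Ac.coact_one, hS1, Ac.mulOne, Ac.aut_one, S.act_one]
  · intro x hx
    let Q := relSubR Ac.mul Ac.aut (coinvA Ac) S.act S.aut
    -- `(m ⊗ a) ⊗ h ↦ μ(m) ⊗ a φ(S(α⁻¹ h))`
    let Ψ0 : (M ⊗[k] A) ⊗[k] H →ₗ[k] M ⊗[k] A :=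
      TensorProduct.map S.aut.toLinearMap
        (TensorProduct.lift Ac.mul ∘ₗ
          TensorProduct.map LinearMap.id (φ ∘ₗ Hh.antipode ∘ₗ Hh.aut.symm.toLinearMap)) ∘ₗ
        (TensorProduct.assoc k M A H).toLinearMap
    have hΨ0 : ∀ m a h, Ψ0 ((m ⊗ₜ[k] a) ⊗ₜ[k] h) =
        S.aut m ⊗ₜ[k] Ac.mul a (φ (Hh.antipode (Hh.aut.symm h))) := by
      intro m a h
      simp [Ψ0]
    have hker : Q ≤ LinearMap.ker (TensorProduct.curry (Q.mkQ ∘ₗ Ψ0)) := by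
      refine Submodule.span_le.2 ?_
      rintro _ ⟨m, a, b, hb, rfl⟩
      rw [SetLike.mem_coe, LinearMap.mem_ker]
      ext h
      rw [TensorProduct.curry_apply, TensorProduct.sub_tmul, LinearMap.comp_apply, map_sub,
        hΨ0, hΨ0, LinearMap.zero_apply]
      rw [Submodule.mkQ_apply, Submodule.Quotient.mk_eq_zero]
      set y := φ (Hh.antipode (Hh.aut.symm h))
      have hy : y = Ac.aut (Ac.aut.symm y) := by simp
      rw [hy, ← Ac.hom_assoc, ← Ac.aut_mul, S.aut_act m b hb]
      exact Submodule.subset_span ⟨S.aut m, _, Ac.aut b, aux_aut_mem Ac hb, rfl⟩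
    let Ψ : ((M ⊗[k] A) ⧸ Q) ⊗[k] H →ₗ[k] ((M ⊗[k] A) ⧸ Q) :=
      TensorProduct.lift (Q.liftQ _ hker)
    have hΨ : ∀ z h, Ψ (Q.mkQ z ⊗ₜ[k] h) = Q.mkQ (Ψ0 (z ⊗ₜ[k] h)) := by
      intro z h
      rfl
    have hΨ' : ∀ w, Ψ (TensorProduct.map Q.mkQ LinearMap.id w) = Q.mkQ (Ψ0 w) := by
      intro w
      induction w with
      | zero => simp
      | add x y hx hy => simp only [map_add, hx, hy]
      | tmul x y => exact hΨ x y
    obtain ⟨z, rfl⟩ := Q.mkQ_surjective x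
    have e1 : ∀ z : M ⊗[k] A, Ψ (θ (Q.mkQ z) ⊗ₜ[k] Hh.one) = Q.mkQ z := by
      intro z
      have hs1 : Hh.aut.symm Hh.one = Hh.one := by
        rw [LinearEquiv.symm_apply_eq, Hh.aut_one]
      rw [hθ', hΨ]
      congr 1
      induction z with
      | zero => simp
      | add x y hx hy => simp only [TensorProduct.add_tmul, map_add, hx, hy]
      | tmul m a =>
        rw [TensorProduct.map_tmul, hΨ0, hs1, hS1, Ac.mulOne]
        simp
    have e2 : ∀ z : M ⊗[k] A, Ψ (ρbar (Q.mkQ z)) =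
        Q.mkQ (TensorProduct.map LinearMap.id t z) := by
      intro z
      rw [hρ', hΨ']
      congr 1
      induction z with
      | zero => simp
      | add x y hx hy => simp only [map_add, hx, hy]
      | tmul m a =>
        simp only [quotCoactPreR, ht, TensorProduct.map_tmul, LinearMap.comp_apply]
        generalize Ac.coact a = w
        induction w with
        | zero => simp
        | add x y hx hy => simp only [TensorProduct.tmul_add, map_add, hx, hy]
        | tmul c g => simp [Ψ0]
    have e3 : ∀ z : M ⊗[k] A, Q.mkQ (S.aut.symm (φbar (Q.mkQ z)) ⊗ₜ[k] Ac.one) =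
        Q.mkQ (TensorProduct.map LinearMap.id t z) := by
      intro z
      rw [hφ']
      induction z with
      | zero => simp
      | add x y hx hy => simp only [TensorProduct.add_tmul, map_add, hx, hy]
      | tmul m a =>
        simp only [TensorProduct.map_tmul, TensorProduct.lift.tmul, LinearMap.id_apply]
        have hb := aux_symm_mem Ac (htm a)
        have h4 := S.aut_act (S.aut.symm m) _ hb
        simp only [LinearEquiv.apply_symm_apply] at h4
        rw [← h4, LinearEquiv.symm_apply_apply, Submodule.mkQ_apply, Submodule.mkQ_apply,
          Submodule.Quotient.eq]
        refine Submodule.subset_span ⟨S.aut.symm m, Ac.one, _, hb, ?_⟩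
        rw [Ac.mulOne, Ac.aut_one]
        simp
    exact (e3 z).trans ((e2 z).symm.trans ((congrArg Ψ hx).trans (e1 z)))
end
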